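/- arXiv:1310.6056 — 3 statements merged into one kernel-verified Lean document; each statement's English description precedes it below -/
import Mathlib

section
/- For every positive integer n, the number of quadruples (x₁, x₂, x₃, x₄) ∈ ℤ⁴ with x₁² + x₂² + x₃² + x₄² = n and x₁ ≡ x₂ ≡ x₃ ≡ x₄ ≡ 1 (mod 2) equals 16σ(n/4) − 48σ(n/8) + 32σ(n/16). -/
open Finset

/-- `sigmaDiv n k = σ(n/k) = ∑_{d ∣ n/k} d`, interpreted as `0` when `k` does not divide `n`. -/
def sigmaDiv (n k : ℕ) : ℤ := if k ∣ n then ∑ d ∈ (n / k).divisors, (d : ℤ) else 0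

/-- The representations of `N` as an ordered sum of `k` odd squares. -/
noncomputable def oddReps (k : ℕ) (N : ℤ) : Finset (Fin k → ℤ) :=
  {x ∈ Fintype.piFinset fun _ : Fin k => Icc (-N) N | ∑ i, x i ^ 2 = N ∧ ∀ i, x i % 2 = 1}

/-- The odd integers in `[-N, N]`. -/
noncomputable def oddIcc (N : ℤ) : Finset ℤ := {i ∈ Icc (-N) N | i % 2 = 1}

/-- The factorizations `M = 4 * d * e` with `d`, `e` odd and positive. -/
noncomputable def oddFactorizations (M : ℤ) : Finset (ℤ × ℤ) :=
  {p ∈ Icc 1 M ×ˢ Icc 1 M | p.1 % 2 = 1 ∧ p.2 % 2 = 1 ∧ 4 * p.1 * p.2 = M}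

/-- The sum of `d` over the factorizations `M = 4 * d * e` with `d`, `e` odd and positive. -/
noncomputable def oddFactorSum (M : ℤ) : ℤ := ∑ p ∈ oddFactorizations M, p.1

/-- The solutions `(i, d, e)` of `i ^ 2 + 4 * d * e = N` in odd integers with `d` and `e`
positive. -/
noncomputable def oddTriples (N : ℤ) : Finset (ℤ × ℤ × ℤ) :=
  {p ∈ Icc (-N) N ×ˢ Icc 1 N ×ˢ Icc 1 N |
    p.1 % 2 = 1 ∧ p.2.1 % 2 = 1 ∧ p.2.2 % 2 = 1 ∧ p.1 ^ 2 + 4 * p.2.1 * p.2.2 = N}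

theorem mem_Icc_of_sq_le {x N : ℤ} (h : x ^ 2 ≤ N) : x ∈ Icc (-N) N := by
  rw [Finset.mem_Icc]
  constructor <;> nlinarith [sq_nonneg (x - 1), sq_nonneg (x + 1), sq_nonneg x]

theorem mem_oddReps {k : ℕ} {N : ℤ} {x : Fin k → ℤ} :
    x ∈ oddReps k N ↔ ∑ i, x i ^ 2 = N ∧ ∀ i, x i % 2 = 1 := by
  simp only [oddReps, Finset.mem_filter, Fintype.mem_piFinset, and_iff_right_iff_imp]
  rintro ⟨h, -⟩ i
  apply mem_Icc_of_sq_le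
  rw [← h]
  exact Finset.single_le_sum (f := fun i => x i ^ 2) (fun i _ => sq_nonneg _) (Finset.mem_univ i)

theorem mem_oddFactorizations {M : ℤ} {p : ℤ × ℤ} :
    p ∈ oddFactorizations M ↔
      (0 < p.1 ∧ 0 < p.2) ∧ p.1 % 2 = 1 ∧ p.2 % 2 = 1 ∧ 4 * p.1 * p.2 = M := by
  simp only [oddFactorizations, Finset.mem_filter, Finset.mem_product, Finset.mem_Icc]
  constructor
  · rintro ⟨⟨⟨h1, -⟩, h2, -⟩, h⟩
    exact ⟨⟨h1, h2⟩, h⟩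
  · rintro ⟨⟨h1, h2⟩, h⟩
    exact ⟨⟨⟨h1, by nlinarith [h.2.2]⟩, h2, by nlinarith [h.2.2]⟩, h⟩

theorem mem_oddTriples {N i d e : ℤ} :
    (i, d, e) ∈ oddTriples N ↔
      (0 < d ∧ 0 < e) ∧ i % 2 = 1 ∧ d % 2 = 1 ∧ e % 2 = 1 ∧ i ^ 2 + 4 * d * e = N := by
  simp only [oddTriples, Finset.mem_filter, Finset.mem_product]
  constructor
  · rintro ⟨⟨-, h1, h2⟩, h⟩
    rw [Finset.mem_Icc] at h1 h2
    exact ⟨⟨h1.1, h2.1⟩, h⟩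
  · rintro ⟨⟨h1, h2⟩, h⟩
    have h3 : 0 < d * e := mul_pos h1 h2
    refine ⟨⟨mem_Icc_of_sq_le (by nlinarith [h.2.2.2]), ?_, ?_⟩, h⟩ <;>
      rw [Finset.mem_Icc] <;> constructor <;> nlinarith [h.2.2.2, sq_nonneg i]

/-- Counting representations by their first coordinate. -/
theorem sum_oddReps_succ (k : ℕ) (N : ℤ) (g : ℤ → ℤ) :
    ∑ x ∈ oddReps (k + 1) N, g (x 0) =
      ∑ i ∈ oddIcc N, g i * (#(oddReps k (N - i ^ 2)) : ℤ) := by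
  have hmaps : ∀ x ∈ oddReps (k + 1) N, x 0 ∈ oddIcc N := by
    intro x hx
    rw [oddReps, Finset.mem_filter, Fintype.mem_piFinset] at hx
    exact Finset.mem_filter.2 ⟨hx.1 0, hx.2.2 0⟩
  rw [← Finset.sum_fiberwise_of_maps_to hmaps]
  refine Finset.sum_congr rfl fun i hi => ?_
  have hi1 : i % 2 = 1 := (Finset.mem_filter.1 hi).2
  have hcard : #{x ∈ oddReps (k + 1) N | x 0 = i} = #(oddReps k (N - i ^ 2)) := by
    refine Finset.card_nbij' (fun x => Fin.tail x) (fun y => Fin.cons i y) ?_ ?_ ?_ ?_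
    · intro x hx
      simp only [Finset.coe_filter, Set.mem_ofPred_eq, mem_oddReps] at hx
      obtain ⟨⟨h1, h2⟩, h3⟩ := hx
      rw [Fin.sum_univ_succ, h3] at h1
      simp only [Finset.mem_coe, mem_oddReps, Fin.tail]
      exact ⟨by linarith, fun j => h2 _⟩
    · intro y hy
      simp only [Finset.mem_coe, mem_oddReps] at hy
      simp only [Finset.coe_filter, Set.mem_ofPred_eq, mem_oddReps, Fin.sum_univ_succ,
        Fin.cons_zero, Fin.cons_succ, Fin.forall_fin_succ, and_true]
      exact ⟨by linarith [hy.1], hi1, hy.2⟩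
    · intro x hx
      simp only [Finset.coe_filter, Set.mem_ofPred_eq] at hx
      simp only [← hx.2, Fin.cons_self_tail]
    · intro y _
      simp
  rw [← hcard, Finset.sum_congr rfl (g := fun _ => g i)
    fun x hx => by rw [(Finset.mem_filter.1 hx).2], Finset.sum_const, nsmul_eq_mul, mul_comm]

theorem sum_oddReps_sq_eq {k : ℕ} (N : ℤ) (i j : Fin k) :
    ∑ x ∈ oddReps k N, x i ^ 2 = ∑ x ∈ oddReps k N, x j ^ 2 := by
  refine Finset.sum_equiv (Equiv.arrowCongr (Equiv.swap i j) (Equiv.refl ℤ)) ?_ ?_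
  · intro x
    simp only [mem_oddReps, Equiv.arrowCongr_apply, Equiv.coe_refl, Function.comp_apply, id,
      Equiv.symm_swap]
    rw [Equiv.sum_comp (Equiv.swap i j) fun l => x l ^ 2,
      Equiv.forall_congr_left (Equiv.swap i j)]
    simp
  · intro x _
    simp

/-- The recurrence satisfied by the number of representations by four odd squares, which expresses
that `θ * D (θ ^ 4) = 4 * D θ * θ ^ 4` for the generating function `θ` of the odd squares and a
derivation `D`. -/
theorem sum_card_oddReps_four (N : ℤ) :
    ∑ i ∈ oddIcc N, (N - 5 * i ^ 2) * (#(oddReps 4 (N - i ^ 2)) : ℤ) = 0 := by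
  rw [← sum_oddReps_succ 4 N fun i => N - 5 * i ^ 2, Finset.sum_sub_distrib, ← Finset.mul_sum]
  have h : ∑ x ∈ oddReps 5 N, ∑ i, x i ^ 2 = ∑ x ∈ oddReps 5 N, N :=
    Finset.sum_congr rfl fun x hx => (mem_oddReps.1 hx).1
  rw [← h, Finset.sum_comm, Finset.sum_congr rfl fun i _ => sum_oddReps_sq_eq N i 0]
  simp

/-- The sum over odd triples, split by the involution `(i, d, e) ↦ (-i, e, d)`. -/
theorem sum_oddTriples_eq (N : ℤ) (g : ℤ × ℤ × ℤ → ℤ) :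
    ∑ p ∈ oddTriples N, g p =
      ∑ p ∈ oddTriples N with p.1 + p.2.1 < p.2.2, (g p + g (-p.1, p.2.2, p.2.1)) := by
  rw [← Finset.sum_filter_add_sum_filter_not (oddTriples N) fun p => p.1 + p.2.1 < p.2.2,
    Finset.sum_add_distrib]
  congr 1
  refine Finset.sum_nbij' (fun p => (-p.1, p.2.2, p.2.1)) (fun p => (-p.1, p.2.2, p.2.1))
    ?_ ?_ ?_ ?_ ?_
  · rintro ⟨i, d, e⟩ hp
    simp only [Finset.mem_filter, mem_oddTriples] at hp ⊢
    obtain ⟨⟨h1, h2, h3, h4, h5⟩, h6⟩ := hp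
    exact ⟨⟨h1.symm, by omega, h4, h3, by linarith⟩, by omega⟩
  · rintro ⟨i, d, e⟩ hp
    simp only [Finset.mem_filter, mem_oddTriples] at hp ⊢
    obtain ⟨⟨h1, h2, h3, h4, h5⟩, h6⟩ := hp
    exact ⟨⟨h1.symm, by omega, h4, h3, by linarith⟩, by omega⟩
  · simp
  · simp
  · simp

/-- A Liouville-type identity: the involution `(i, d, e) ↦ (-i - 2 * d, d, e - i - d)` negates
`(d + e) * (e - i) * (d + i)`. -/
theorem sum_oddTriples_prod (N : ℤ) :
    ∑ p ∈ oddTriples N with p.1 + p.2.1 < p.2.2,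
      (p.2.1 + p.2.2) * (p.2.2 - p.1) * (p.2.1 + p.1) = 0 := by
  have h : ∑ p ∈ oddTriples N with p.1 + p.2.1 < p.2.2,
      (p.2.1 + p.2.2) * (p.2.2 - p.1) * (p.2.1 + p.1) =
      ∑ p ∈ oddTriples N with p.1 + p.2.1 < p.2.2,
      -((p.2.1 + p.2.2) * (p.2.2 - p.1) * (p.2.1 + p.1)) := by
    refine Finset.sum_nbij' (fun p => (-p.1 - 2 * p.2.1, p.2.1, p.2.2 - p.1 - p.2.1))
      (fun p => (-p.1 - 2 * p.2.1, p.2.1, p.2.2 - p.1 - p.2.1)) ?_ ?_ ?_ ?_ ?_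
    · rintro ⟨i, d, e⟩ hp
      simp only [Finset.mem_filter, mem_oddTriples] at hp ⊢
      obtain ⟨⟨h1, h2, h3, h4, h5⟩, h6⟩ := hp
      exact ⟨⟨⟨h1.1, by omega⟩, by omega, h3, by omega, by linarith⟩, by omega⟩
    · rintro ⟨i, d, e⟩ hp
      simp only [Finset.mem_filter, mem_oddTriples] at hp ⊢
      obtain ⟨⟨h1, h2, h3, h4, h5⟩, h6⟩ := hp
      exact ⟨⟨⟨h1.1, by omega⟩, by omega, h3, by omega, by linarith⟩, by omega⟩
    · rintro ⟨i, d, e⟩ -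
      ext <;> simp only <;> ring
    · rintro ⟨i, d, e⟩ -
      ext <;> simp only <;> ring
    · rintro ⟨i, d, e⟩ -
      simp only
      ring
  rw [Finset.sum_neg_distrib] at h
  linarith

theorem sum_oddTriples_mul_sq (N : ℤ) : ∑ p ∈ oddTriples N, p.1 * p.2.1 ^ 2 = 0 := by
  have h : ∑ p ∈ oddTriples N, p.1 * p.2.1 ^ 2 = ∑ p ∈ oddTriples N, -(p.1 * p.2.1 ^ 2) := by
    refine Finset.sum_nbij' (fun p => (-p.1, p.2)) (fun p => (-p.1, p.2)) ?_ ?_ ?_ ?_ ?_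
    · rintro ⟨i, d, e⟩ hp
      rw [mem_oddTriples] at hp ⊢
      exact ⟨hp.1, by omega, hp.2.2.1, hp.2.2.2.1, by linarith [hp.2.2.2.2]⟩
    · rintro ⟨i, d, e⟩ hp
      rw [mem_oddTriples] at hp ⊢
      exact ⟨hp.1, by omega, hp.2.2.1, hp.2.2.2.1, by linarith [hp.2.2.2.2]⟩
    · simp
    · simp
    · simp
  rw [Finset.sum_neg_distrib] at h
  linarith

theorem sum_oddTriples_eq_zero (N : ℤ) :
    ∑ p ∈ oddTriples N, p.2.1 * (p.2.1 * p.2.2 - p.1 ^ 2) = 0 := by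
  have h := sum_oddTriples_eq N fun p => p.2.1 * (p.2.1 * p.2.2 - p.1 ^ 2) - p.1 * p.2.1 ^ 2
  rw [Finset.sum_sub_distrib, sum_oddTriples_mul_sq, sub_zero] at h
  rw [h, ← sum_oddTriples_prod N]
  refine Finset.sum_congr rfl fun p _ => ?_
  ring

/-- The divisor-sum side satisfies the recurrence of `sum_card_oddReps_four`. -/
theorem sum_oddFactorSum (N : ℤ) :
    ∑ i ∈ oddIcc N, (N - 5 * i ^ 2) * oddFactorSum (N - i ^ 2) = 0 := by
  have hsum : ∑ p ∈ oddTriples N, 4 * (p.2.1 * (p.2.1 * p.2.2 - p.1 ^ 2)) = 0 := by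
    rw [← Finset.mul_sum, sum_oddTriples_eq_zero, mul_zero]
  have hmaps : ∀ p ∈ oddTriples N, p.1 ∈ oddIcc N := by
    intro p hp
    rw [oddTriples, Finset.mem_filter, Finset.mem_product] at hp
    exact Finset.mem_filter.2 ⟨hp.1.1, hp.2.1⟩
  rw [← hsum, ← Finset.sum_fiberwise_of_maps_to hmaps]
  refine Finset.sum_congr rfl fun i hi => ?_
  have hi1 : i % 2 = 1 := (Finset.mem_filter.1 hi).2
  rw [oddFactorSum, Finset.mul_sum]
  refine Finset.sum_nbij' (fun q => (i, q)) (fun p => p.2) ?_ ?_ ?_ ?_ ?_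
  · rintro ⟨d, e⟩ hq
    rw [mem_oddFactorizations] at hq
    rw [Finset.mem_filter, mem_oddTriples]
    exact ⟨⟨hq.1, hi1, hq.2.1, hq.2.2.1, by linarith [hq.2.2.2]⟩, rfl⟩
  · rintro ⟨j, d, e⟩ hp
    rw [Finset.mem_filter, mem_oddTriples] at hp
    obtain ⟨⟨h1, -, h3, h4, h5⟩, rfl⟩ := hp
    exact mem_oddFactorizations.2 ⟨h1, h3, h4, by simp only; linarith⟩
  · simp
  · rintro ⟨j, d, e⟩ hp
    rw [← (Finset.mem_filter.1 hp).2]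
  · rintro ⟨d, e⟩ hq
    have h := (mem_oddFactorizations.1 hq).2.2.2
    simp only at h ⊢
    linear_combination (-d) * h

/-- A solution of the recurrence is determined by its value at `4`. -/
theorem eq_zero_of_sum_oddIcc {h : ℤ → ℤ} (hneg : ∀ M ≤ 0, h M = 0) (hfour : h 4 = 0)
    (hrec : ∀ N, ∑ i ∈ oddIcc N, (N - 5 * i ^ 2) * h (N - i ^ 2) = 0) (M : ℕ) : h M = 0 := by
  induction M using Nat.strong_induction_on with
  | _ M ih =>
    rcases Nat.eq_zero_or_pos M with rfl | hM
    · exact hneg _ le_rfl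
    have hr := hrec (M + 1)
    have hsub : ({1, -1} : Finset ℤ) ⊆ oddIcc (M + 1) := by
      intro i hi
      simp only [Finset.mem_insert, Finset.mem_singleton] at hi
      simp only [oddIcc, Finset.mem_filter, Finset.mem_Icc]
      omega
    rw [← Finset.sum_subset hsub, Finset.sum_pair (by norm_num)] at hr
    · norm_num at hr
      rcases eq_or_ne M 4 with rfl | h4
      · exact hfour
      rcases hr with hr | hr
      · omega
      · exact hr
    · intro i hi hi'
      simp only [oddIcc, Finset.mem_filter] at hi
      simp only [Finset.mem_insert, Finset.mem_singleton, not_or] at hi'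
      have hsq : 9 ≤ i ^ 2 := by
        rcases le_or_gt 0 i with h0 | h0
        · have : 3 ≤ i := by omega
          nlinarith
        · have : i ≤ -3 := by omega
          nlinarith
      rcases le_or_gt ((M : ℤ) + 1 - i ^ 2) 0 with h0 | h0
      · rw [hneg _ h0, mul_zero]
      · have hlt := ih ((M : ℤ) + 1 - i ^ 2).toNat (by omega)
        rw [Int.toNat_of_nonneg h0.le] at hlt
        rw [hlt, mul_zero]

theorem one_le_sq_of_odd {x : ℤ} (hx : x % 2 = 1) : 1 ≤ x ^ 2 := by
  have : x ≠ 0 := by omega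
  have := sq_pos_of_ne_zero this
  omega

theorem oddReps_four_four :
    oddReps 4 4 = Fintype.piFinset fun _ : Fin 4 => ({1, -1} : Finset ℤ) := by
  ext x
  simp only [mem_oddReps, Fintype.mem_piFinset, Finset.mem_insert, Finset.mem_singleton]
  constructor
  · rintro ⟨h, hodd⟩ i
    have hi : x i ^ 2 = 1 := by
      rw [Fin.sum_univ_four] at h
      have h0 := one_le_sq_of_odd (hodd 0)
      have h1 := one_le_sq_of_odd (hodd 1)
      have h2 := one_le_sq_of_odd (hodd 2)
      have h3 := one_le_sq_of_odd (hodd 3)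
      fin_cases i <;> simp only [Fin.zero_eta, Fin.mk_one, Fin.reduceFinMk] <;> omega
    exact sq_eq_one_iff.1 hi
  · intro h
    have hsq : ∀ i, x i ^ 2 = 1 := fun i => by rcases h i with h | h <;> simp [h]
    exact ⟨by simp [hsq], fun i => by rcases h i with h | h <;> simp [h]⟩

theorem card_oddReps_four (n : ℕ) : (#(oddReps 4 n) : ℤ) = 16 * oddFactorSum n := by
  refine sub_eq_zero.1 (eq_zero_of_sum_oddIcc
    (h := fun M => (#(oddReps 4 M) : ℤ) - 16 * oddFactorSum M) ?_ ?_ ?_ n)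
  · intro M hM
    have h1 : oddReps 4 M = ∅ := by
      refine Finset.eq_empty_of_forall_notMem fun x hx => ?_
      obtain ⟨h, hodd⟩ := mem_oddReps.1 hx
      rw [Fin.sum_univ_four] at h
      have h0 := one_le_sq_of_odd (hodd 0)
      have h1 := one_le_sq_of_odd (hodd 1)
      have h2 := one_le_sq_of_odd (hodd 2)
      have h3 := one_le_sq_of_odd (hodd 3)
      omega
    have h2 : oddFactorizations M = ∅ := by
      refine Finset.eq_empty_of_forall_notMem fun p hp => ?_
      obtain ⟨⟨h1, h2⟩, -, -, h3⟩ := mem_oddFactorizations.1 hp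
      nlinarith [mul_pos h1 h2]
    simp [oddFactorSum, h1, h2]
  · have : oddFactorizations 4 = {(1, 1)} := by decide
    simp [oddFactorSum, this, oddReps_four_four]
  · intro N
    simp only [mul_sub]
    rw [Finset.sum_sub_distrib, sum_card_oddReps_four, zero_sub, neg_eq_zero]
    have := sum_oddFactorSum N
    simp only [mul_left_comm _ (16 : ℤ)]
    rw [← Finset.mul_sum, this, mul_zero]

theorem oddFactorSum_four_mul {m : ℕ} (hm : m % 2 = 1) :
    oddFactorSum ((4 * m : ℕ) : ℤ) = ∑ d ∈ m.divisors, (d : ℤ) := by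
  rw [← Nat.sum_divisorsAntidiagonal fun d _ => (d : ℤ), oddFactorSum]
  symm
  refine Finset.sum_nbij' (fun p => ((p.1 : ℤ), (p.2 : ℤ))) (fun p => (p.1.toNat, p.2.toNat))
    ?_ ?_ ?_ ?_ ?_
  · rintro ⟨d, e⟩ hp
    obtain ⟨rfl, h0⟩ := Nat.mem_divisorsAntidiagonal.1 hp
    have hodd := Nat.odd_mul.1 (Nat.odd_iff.2 hm)
    simp only [Nat.odd_iff] at hodd
    simp only [mem_oddFactorizations]
    refine ⟨by omega, by omega, by omega, by push_cast; ring⟩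
  · rintro ⟨d, e⟩ hp
    obtain ⟨⟨h1, h2⟩, -, -, h3⟩ := mem_oddFactorizations.1 hp
    simp only at h1 h2 h3
    lift d to ℕ using h1.le
    lift e to ℕ using h2.le
    rw [mul_assoc] at h3
    norm_cast at h3
    simp only [Int.toNat_natCast, Nat.mem_divisorsAntidiagonal]
    omega
  · simp
  · rintro ⟨d, e⟩ hp
    obtain ⟨⟨h1, h2⟩, -⟩ := mem_oddFactorizations.1 hp
    simp only at h1 h2
    simp [h1.le, h2.le]
  · simp

theorem oddFactorSum_eq_zero {n : ℤ} (hn : n % 8 ≠ 4) : oddFactorSum n = 0 := by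
  have : oddFactorizations n = ∅ := by
    refine Finset.eq_empty_of_forall_notMem fun p hp => hn ?_
    obtain ⟨-, h1, h2, h3⟩ := mem_oddFactorizations.1 hp
    have h4 : p.1 * p.2 % 2 = 1 := by simp [Int.mul_emod, h1, h2]
    rw [mul_assoc] at h3
    omega
  simp [oddFactorSum, this]

theorem sum_divisors_two_pow_mul {k : ℕ} (hk : Odd k) (a : ℕ) :
    ∑ d ∈ (2 ^ a * k).divisors, (d : ℤ) = (2 ^ (a + 1) - 1) * ∑ d ∈ k.divisors, (d : ℤ) := by
  have hcop : Nat.Coprime (2 ^ a) k := (Nat.coprime_two_left.2 hk).pow_left a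
  have h := congrArg (Nat.cast (R := ℤ)) hcop.sum_divisors_mul
  rw [Nat.cast_mul, Nat.cast_sum, Nat.cast_sum, Nat.cast_sum] at h
  have h2 : ∑ d ∈ Nat.divisors (2 ^ a), (d : ℤ) = 2 ^ (a + 1) - 1 := by
    rw [Nat.sum_divisors_prime_pow Nat.prime_two]
    push_cast
    linarith [geom_sum_mul (2 : ℤ) (a + 1)]
  rw [h, h2]

theorem sigmaDiv_combination_eq_zero {n : ℕ} (hn : 0 < n) (h : 8 ∣ n) :
    16 * sigmaDiv n 4 - 48 * sigmaDiv n 8 + 32 * sigmaDiv n 16 = 0 := by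
  obtain ⟨m, rfl⟩ := h
  obtain ⟨a, k, hk, rfl⟩ := Nat.exists_eq_two_pow_mul_odd (n := m) (by omega)
  have e4 : 8 * (2 ^ a * k) = 4 * (2 ^ (a + 1) * k) := by ring
  have h4 : sigmaDiv (8 * (2 ^ a * k)) 4 = (2 ^ (a + 2) - 1) * ∑ d ∈ k.divisors, (d : ℤ) := by
    rw [e4, sigmaDiv, if_pos (dvd_mul_right _ _), Nat.mul_div_cancel_left _ (by norm_num),
      sum_divisors_two_pow_mul hk]
  have h8 : sigmaDiv (8 * (2 ^ a * k)) 8 = (2 ^ (a + 1) - 1) * ∑ d ∈ k.divisors, (d : ℤ) := by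
    rw [sigmaDiv, if_pos (dvd_mul_right _ _), Nat.mul_div_cancel_left _ (by norm_num),
      sum_divisors_two_pow_mul hk]
  have h16 : sigmaDiv (8 * (2 ^ a * k)) 16 = (2 ^ a - 1) * ∑ d ∈ k.divisors, (d : ℤ) := by
    cases a with
    | zero =>
      rw [Nat.odd_iff] at hk
      rw [sigmaDiv, if_neg (by omega)]
      simp
    | succ b =>
      have e16 : 8 * (2 ^ (b + 1) * k) = 16 * (2 ^ b * k) := by ring
      rw [e16, sigmaDiv, if_pos (dvd_mul_right _ _), Nat.mul_div_cancel_left _ (by norm_num),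
        sum_divisors_two_pow_mul hk]
  rw [h4, h8, h16]
  ring

theorem rep_four_squares_all_odd (n : ℕ) (hn : 0 < n) :
    ({x : Fin 4 → ℤ | x 0 ^ 2 + x 1 ^ 2 + x 2 ^ 2 + x 3 ^ 2 = (n : ℤ) ∧
        x 0 % 2 = 1 ∧ x 1 % 2 = 1 ∧ x 2 % 2 = 1 ∧ x 3 % 2 = 1}.ncard : ℤ) =
      16 * sigmaDiv n 4 - 48 * sigmaDiv n 8 + 32 * sigmaDiv n 16 := by
  have hset : {x : Fin 4 → ℤ | x 0 ^ 2 + x 1 ^ 2 + x 2 ^ 2 + x 3 ^ 2 = (n : ℤ) ∧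
      x 0 % 2 = 1 ∧ x 1 % 2 = 1 ∧ x 2 % 2 = 1 ∧ x 3 % 2 = 1} = (oddReps 4 n : Set (Fin 4 → ℤ)) := by
    ext x
    simp [mem_oddReps, Fin.sum_univ_four, Fin.forall_fin_succ]
  rw [hset, Set.ncard_coe_finset, card_oddReps_four]
  by_cases h8 : 8 ∣ n
  · rw [sigmaDiv_combination_eq_zero hn h8, oddFactorSum_eq_zero (by omega), mul_zero]
  have h16 : ¬ 16 ∣ n := by omega
  by_cases h4 : 4 ∣ n
  · obtain ⟨m, rfl⟩ := h4
    rw [oddFactorSum_four_mul (by omega)]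
    simp [sigmaDiv, h8, h16]
  · rw [oddFactorSum_eq_zero (by omega)]
    simp [sigmaDiv, h4, h8, h16]
end

section
/- For every positive integer n, the number of quadruples (x₁, x₂, x₃, x₄) ∈ ℤ⁴ with x₁² + x₁x₂ + x₂² + x₃² + x₃x₄ + x₄² = n, x₁ ≡ 1 (mod 2), and x₂ ≡ x₃ ≡ x₄ ≡ 0 (mod 2) equals 2σ(n) − 6σ(n/2) − 6σ(n/3) + 4σ(n/4) + 18σ(n/6) − 12σ(n/12). -/
open Finset

/-! ### Representations by `x ^ 2 + x * y + y ^ 2` -/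

/-- The set of representations of `n` by the form `x ^ 2 + x * y + y ^ 2`. -/
def hexReps (n : ℕ) : Set (ℤ × ℤ) := {v | v.1 ^ 2 + v.1 * v.2 + v.2 ^ 2 = n}

theorem mem_hexReps {n : ℕ} {v : ℤ × ℤ} :
    v ∈ hexReps n ↔ v.1 ^ 2 + v.1 * v.2 + v.2 ^ 2 = n := Iff.rfl

theorem hexReps_finite (n : ℕ) : (hexReps n).Finite := by
  refine (((Set.finite_Icc (-(2 * n : ℤ)) (2 * n)).prod
    (Set.finite_Icc (-(2 * n : ℤ)) (2 * n)))).subset ?_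
  rintro ⟨x, y⟩ h
  rw [mem_hexReps] at h
  dsimp only at h
  refine ⟨⟨?_, ?_⟩, ?_, ?_⟩ <;> dsimp only <;>
    nlinarith [sq_nonneg (2 * x + y), sq_nonneg (x + 2 * y), sq_nonneg (x + 1), sq_nonneg (x - 1),
      sq_nonneg (y + 1), sq_nonneg (y - 1)]

/-- Elements of norm `N (a, b) * n` divisible by `(a, b)` correspond to elements of norm `n`. -/
theorem ncard_hexReps_dvd {p n : ℕ} (hp : p.Prime) {a b : ℤ} (hab : a ^ 2 + a * b + b ^ 2 = p) :
    {v ∈ hexReps (p * n) | (p : ℤ) ∣ a * v.2 - b * v.1}.ncard = (hexReps n).ncard := by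
  have hp0 : (p : ℤ) ≠ 0 := mod_cast hp.ne_zero
  have himage : {v ∈ hexReps (p * n) | (p : ℤ) ∣ a * v.2 - b * v.1} =
      (fun w : ℤ × ℤ => (a * w.1 - b * w.2, a * w.2 + b * w.1 + b * w.2)) '' hexReps n := by
    ext ⟨x, y⟩
    simp only [Set.mem_image, Set.mem_ofPred_eq, mem_hexReps, Prod.mk.injEq, Prod.exists]
    push_cast
    constructor
    · rintro ⟨h, v, hv⟩
      have hu : (p : ℤ) ∣ (a + b) * x + b * y := by
        refine (Nat.prime_iff_prime_int.mp hp).dvd_of_dvd_pow (n := 2) ?_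
        refine ⟨p * n - ((a + b) * x + b * y) * v - p * v ^ 2, ?_⟩
        linear_combination (a ^ 2 + a * b + b ^ 2) * h + p * n * hab -
          ((a + b) * x + b * y + (a * y - b * x) + p * v) * hv
      obtain ⟨u, hu⟩ := hu
      refine ⟨u, v, ?_, ?_, ?_⟩
      · refine mul_left_cancel₀ (pow_ne_zero 2 hp0) ?_
        linear_combination (a ^ 2 + a * b + b ^ 2) * h + p * n * hab -
          ((a + b) * x + b * y + p * u + (a * y - b * x)) * hu -
          (p * u + (a * y - b * x) + p * v) * hv
      · refine mul_left_cancel₀ hp0 ?_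
        linear_combination x * hab - a * hu + b * hv
      · refine mul_left_cancel₀ hp0 ?_
        linear_combination y * hab - b * hu - (a + b) * hv
    · rintro ⟨u, v, h, rfl, rfl⟩
      refine ⟨?_, v, ?_⟩
      · linear_combination (a ^ 2 + a * b + b ^ 2) * h + n * hab
      · linear_combination v * hab
  rw [himage]
  refine Set.ncard_image_of_injective _ ?_
  rintro ⟨u, v⟩ ⟨u', v'⟩ h
  simp only [Prod.mk.injEq] at h ⊢
  constructor <;> refine mul_left_cancel₀ hp0 ?_
  · linear_combination (a + b) * h.1 + b * h.2 - (u - u') * hab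
  · linear_combination a * h.2 - b * h.1 - (v - v') * hab

/-- Elements of norm `p * n` divisible by `p` correspond to elements of norm `n / p`. -/
theorem ncard_hexReps_dvd_both {p n : ℕ} (hp : p.Prime) :
    {v ∈ hexReps (p * n) | (p : ℤ) ∣ v.1 ∧ (p : ℤ) ∣ v.2}.ncard =
      if p ∣ n then (hexReps (n / p)).ncard else 0 := by
  have hp0 : (p : ℤ) ≠ 0 := mod_cast hp.ne_zero
  split_ifs with h
  · obtain ⟨m, rfl⟩ := h
    rw [Nat.mul_div_cancel_left _ hp.pos]
    have himage : {v ∈ hexReps (p * (p * m)) | (p : ℤ) ∣ v.1 ∧ (p : ℤ) ∣ v.2} =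
        (fun w : ℤ × ℤ => (p * w.1, p * w.2)) '' hexReps m := by
      ext ⟨x, y⟩
      simp only [Set.mem_image, Set.mem_ofPred_eq, mem_hexReps, Prod.mk.injEq, Prod.exists]
      push_cast
      constructor
      · rintro ⟨h, ⟨u, rfl⟩, v, rfl⟩
        refine ⟨u, v, mul_left_cancel₀ (pow_ne_zero 2 hp0) ?_, rfl, rfl⟩
        linear_combination h
      · rintro ⟨u, v, h, rfl, rfl⟩
        refine ⟨?_, dvd_mul_right _ _, dvd_mul_right _ _⟩
        linear_combination (p : ℤ) ^ 2 * h
    rw [himage]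
    refine Set.ncard_image_of_injective _ ?_
    rintro ⟨u, v⟩ ⟨u', v'⟩ h
    simpa [hp.ne_zero] using h
  · rw [Set.ncard_eq_zero ((hexReps_finite _).subset (Set.sep_subset _ _))]
    refine Set.eq_empty_of_forall_notMem ?_
    rintro ⟨x, y⟩ ⟨hN, ⟨u, hu⟩, v, hv⟩
    rw [mem_hexReps] at hN
    dsimp only at hN hu hv
    subst hu hv
    refine h (Int.natCast_dvd_natCast.mp ⟨u ^ 2 + u * v + v ^ 2, mul_left_cancel₀ hp0 ?_⟩)
    push_cast at hN
    linear_combination -hN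

/-- The nontrivial Dirichlet character modulo `3`. -/
def chiThree (d : ℕ) : ℤ := if d % 3 = 1 then 1 else if d % 3 = 2 then -1 else 0

theorem chiThree_mul (a b : ℕ) : chiThree (a * b) = chiThree a * chiThree b := by
  have ha : a % 3 < 3 := Nat.mod_lt _ (by norm_num)
  have hb : b % 3 < 3 := Nat.mod_lt _ (by norm_num)
  rw [chiThree, chiThree, chiThree, Nat.mul_mod]
  interval_cases a % 3 <;> interval_cases b % 3 <;> simp

theorem dvd_of_mem_hexReps {p n : ℕ} (hp : p.Prime) (h3 : p % 3 = 2) {v : ℤ × ℤ}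
    (hv : v ∈ hexReps (p * n)) : (p : ℤ) ∣ v.1 ∧ (p : ℤ) ∣ v.2 := by
  have : Fact p.Prime := ⟨hp⟩
  obtain ⟨x, y⟩ := v
  simp only [mem_hexReps, ← ZMod.intCast_zmod_eq_zero_iff_dvd] at hv ⊢
  have hN : (x : ZMod p) ^ 2 + x * y + y ^ 2 = 0 := by
    have := congrArg (Int.cast : ℤ → ZMod p) hv
    simpa using this
  generalize (x : ZMod p) = x at *
  generalize (y : ZMod p) = y at *
  by_cases hx : x = 0
  · subst hx
    simpa using hN
  by_cases hy : y = 0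
  · subst hy
    simpa using hN
  exfalso
  have hcube : x ^ 3 = y ^ 3 := by linear_combination (x - y) * hN
  obtain ⟨k, hk⟩ : ∃ k, p - 1 = 3 * k + 1 := ⟨p / 3, by omega⟩
  have hx1 := ZMod.pow_card_sub_one_eq_one hx
  have hy1 := ZMod.pow_card_sub_one_eq_one hy
  rw [hk, pow_succ, pow_mul] at hx1 hy1
  rw [← hcube] at hy1
  have hxy : x = y := by
    refine mul_left_cancel₀ (left_ne_zero_of_mul_eq_one hx1) (hx1.trans hy1.symm)
  subst hxy
  have h30 : ((3 : ℕ) : ZMod p) = 0 := by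
    have : (3 : ZMod p) * x ^ 2 = 0 := by linear_combination hN
    simpa [hx] using this
  rw [ZMod.natCast_eq_zero_iff, Nat.prime_dvd_prime_iff_eq hp Nat.prime_three] at h30
  omega

theorem exists_hexReps_prime {p : ℕ} (hp : p.Prime) (h3 : p % 3 = 1) :
    ∃ a b : ℤ, a ^ 2 + a * b + b ^ 2 = p := by
  have : Fact p.Prime := ⟨hp⟩
  obtain ⟨t, ht⟩ : ∃ t : ZMod p, t ^ 2 + t + 1 = 0 := by
    have : Fact (Nat.Prime 3) := ⟨Nat.prime_three⟩
    obtain ⟨u, hu⟩ := exists_prime_orderOf_dvd_card (G := (ZMod p)ˣ) 3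
      (by rw [ZMod.card_units]; omega)
    have hu3 : (u : ZMod p) ^ 3 = 1 := by
      rw [← Units.val_pow_eq_pow_val, ← hu, pow_orderOf_eq_one, Units.val_one]
    have hu1 : (u : ZMod p) - 1 ≠ 0 := by
      rw [sub_ne_zero]
      intro h
      rw [Units.val_eq_one] at h
      rw [h, orderOf_one] at hu
      omega
    exact ⟨u, mul_left_cancel₀ hu1 (by linear_combination hu3)⟩
  set s := Nat.sqrt p
  have hs1 : p < (s + 1) * (s + 1) := Nat.lt_succ_sqrt p
  have hs2 : s * s < p := by
    refine lt_of_le_of_ne (Nat.sqrt_le p) fun h => ?_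
    have hs0 : s ≠ 1 := by 
      intro h1
      rw [h1] at h
      exact hp.one_lt.ne h
    exact Nat.not_prime_of_mul_eq h hs0 hs0 hp
  obtain ⟨⟨u, v⟩, ⟨u', v'⟩, hne, heq⟩ := Fintype.exists_ne_map_eq_of_card_lt
    (fun w : Fin (s + 1) × Fin (s + 1) => ((w.1 : ℕ) : ZMod p) - t * ((w.2 : ℕ) : ZMod p))
    (by simpa [ZMod.card] using hs1)
  obtain ⟨x, hx⟩ : ∃ x : ℤ, x = (u : ℕ) - (u' : ℕ) := ⟨_, rfl⟩
  obtain ⟨y, hy⟩ : ∃ y : ℤ, y = (v : ℕ) - (v' : ℕ) := ⟨_, rfl⟩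
  have hxs : |x| ≤ s := by rw [abs_le]; omega
  have hys : |y| ≤ s := by rw [abs_le]; omega
  have hxy : x ≠ 0 ∨ y ≠ 0 := by
    by_contra! h
    refine hne (Prod.ext (Fin.ext ?_) (Fin.ext ?_)) <;> dsimp only <;> omega
  have hdvd : (p : ℤ) ∣ x ^ 2 + x * y + y ^ 2 := by
    rw [← ZMod.intCast_zmod_eq_zero_iff_dvd]
    have hxt : (x : ZMod p) = t * y := by
      rw [hx, hy]
      push_cast
      linear_combination heq
    push_cast
    rw [hxt]
    linear_combination (y : ZMod p) ^ 2 * ht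
  obtain ⟨c, hc⟩ := hdvd
  have hx2 : x ^ 2 ≤ s * s := by nlinarith [sq_abs x, abs_nonneg x]
  have hy2 : y ^ 2 ≤ s * s := by nlinarith [sq_abs y, abs_nonneg y]
  have hs2' : (s * s : ℤ) < p := mod_cast hs2
  have hpos : 0 < x ^ 2 + x * y + y ^ 2 := by
    rcases hxy with h | h
    · nlinarith [sq_nonneg (x + 2 * y), sq_pos_of_ne_zero h]
    · nlinarith [sq_nonneg (2 * x + y), sq_pos_of_ne_zero h]
  have hc0 : 0 < c := by
    by_contra! h
    nlinarith
  have hc3 : c < 3 := by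
    by_contra! h
    nlinarith [sq_nonneg (x - y)]
  have hc12 : c = 1 ∨ c = 2 := by omega
  rcases hc12 with rfl | rfl
  · exact ⟨x, y, by rw [hc, mul_one]⟩
  · exfalso
    obtain ⟨⟨k, hk⟩, l, hl⟩ := dvd_of_mem_hexReps (n := p) (v := (x, y)) Nat.prime_two rfl
      (by rw [mem_hexReps]; push_cast; rw [hc, mul_comm])
    dsimp only at hk hl
    have h2 : 2 ∣ p := by
      refine Int.natCast_dvd_natCast.mp ⟨k ^ 2 + k * l + l ^ 2, ?_⟩
      rw [hk, hl] at hc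
      push_cast at hc ⊢
      linarith
    have := (Nat.prime_dvd_prime_iff_eq Nat.prime_two hp).mp h2
    omega

theorem ncard_hexReps_mul_of_mod_three_eq_one {p : ℕ} (hp : p.Prime) (h3 : p % 3 = 1) (n : ℕ) :
    (hexReps (p * n)).ncard + (if p ∣ n then (hexReps (n / p)).ncard else 0) =
      2 * (hexReps n).ncard := by
  obtain ⟨a, b, hab⟩ := exists_hexReps_prime hp h3
  have hpZ := Nat.prime_iff_prime_int.mp hp
  have hab' : (a + b) ^ 2 + (a + b) * (-b) + (-b) ^ 2 = p := by linear_combination hab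
  have hb : ¬ (p : ℤ) ∣ b := by
    intro hb
    have ha : (p : ℤ) ∣ a := hpZ.dvd_of_dvd_pow (n := 2) <| by
      rw [show a ^ 2 = p - b * (a + b) by linear_combination hab]
      exact dvd_sub dvd_rfl (hb.mul_right _)
    obtain ⟨a, rfl⟩ := ha
    obtain ⟨b, rfl⟩ := hb
    refine hpZ.not_dvd_one ⟨a ^ 2 + a * b + b ^ 2, mul_left_cancel₀ hpZ.ne_zero ?_⟩
    linear_combination -hab
  have hab2 : ¬ (p : ℤ) ∣ 2 * a + b := by
    rintro ⟨c, hc⟩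
    have h3b : (p : ℤ) ∣ 3 * b ^ 2 :=
      ⟨4 - c * (2 * a + b), by linear_combination 4 * hab - (2 * a + b) * hc⟩
    rcases hpZ.dvd_or_dvd h3b with h | h
    · have := (Nat.prime_dvd_prime_iff_eq hp Nat.prime_three).mp (by exact_mod_cast h)
      omega
    · exact hb (hpZ.dvd_of_dvd_pow h)
  have hunion : {v ∈ hexReps (p * n) | (p : ℤ) ∣ a * v.2 - b * v.1} ∪
      {v ∈ hexReps (p * n) | (p : ℤ) ∣ (a + b) * v.2 - (-b) * v.1} = hexReps (p * n) := by
    rw [← Set.sep_or, Set.sep_eq_self_iff_mem_true]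
    rintro ⟨x, y⟩ hv
    rw [mem_hexReps] at hv
    push_cast at hv
    refine hpZ.dvd_or_dvd ⟨y ^ 2 - b ^ 2 * n, ?_⟩
    dsimp only at hv ⊢
    linear_combination y ^ 2 * hab - b ^ 2 * hv
  have hinter : {v ∈ hexReps (p * n) | (p : ℤ) ∣ a * v.2 - b * v.1} ∩
      {v ∈ hexReps (p * n) | (p : ℤ) ∣ (a + b) * v.2 - (-b) * v.1} =
      {v ∈ hexReps (p * n) | (p : ℤ) ∣ v.1 ∧ (p : ℤ) ∣ v.2} := by
    rw [← Set.sep_and]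
    ext ⟨x, y⟩
    simp only [Set.mem_ofPred_eq, and_congr_right_iff]
    refine fun _ => ⟨fun ⟨h1, h2⟩ => ?_, fun ⟨h1, h2⟩ => ?_⟩
    · have hy : (p : ℤ) ∣ y := by
        refine (hpZ.dvd_or_dvd (a := 2 * a + b) ?_).resolve_left hab2
        convert dvd_add h1 h2 using 1
        ring
      refine ⟨(hpZ.dvd_or_dvd (a := b) ?_).resolve_left hb, hy⟩
      convert dvd_sub (hy.mul_left a) h1 using 1
      ring
    · exact ⟨dvd_sub (h2.mul_left _) (h1.mul_left _), dvd_sub (h2.mul_left _) (h1.mul_left _)⟩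
  have h := Set.ncard_union_add_ncard_inter
    {v ∈ hexReps (p * n) | (p : ℤ) ∣ a * v.2 - b * v.1}
    {v ∈ hexReps (p * n) | (p : ℤ) ∣ (a + b) * v.2 - (-b) * v.1}
    ((hexReps_finite _).subset (Set.sep_subset _ _))
    ((hexReps_finite _).subset (Set.sep_subset _ _))
  rw [hunion, hinter, ncard_hexReps_dvd hp hab, ncard_hexReps_dvd hp hab',
    ncard_hexReps_dvd_both hp] at h
  rw [h, two_mul]

theorem ncard_hexReps_prime_mul {p : ℕ} (hp : p.Prime) (n : ℕ) :
    ((hexReps (p * n)).ncard : ℤ) = (1 + chiThree p) * (hexReps n).ncard -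
      chiThree p * if p ∣ n then ((hexReps (n / p)).ncard : ℤ) else 0 := by
  have h : p % 3 = 0 ∨ p % 3 = 1 ∨ p % 3 = 2 := by omega
  rcases h with h | h | h
  · obtain rfl := (Nat.prime_dvd_prime_iff_eq Nat.prime_three hp).mp (Nat.dvd_of_mod_eq_zero h)
    have hsep : {v ∈ hexReps (3 * n) | ((3 : ℕ) : ℤ) ∣ 1 * v.2 - 1 * v.1} = hexReps (3 * n) := by
      rw [Set.sep_eq_self_iff_mem_true]
      rintro ⟨x, y⟩ hv
      rw [mem_hexReps] at hv
      push_cast at hv ⊢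
      refine Int.prime_three.dvd_of_dvd_pow (n := 2) ⟨n - x * y, ?_⟩
      linear_combination hv
    rw [← hsep, ncard_hexReps_dvd Nat.prime_three (by norm_num)]
    simp [chiThree]
  · have := ncard_hexReps_mul_of_mod_three_eq_one hp h n
    simp only [chiThree, h, if_true]
    split_ifs at this ⊢ <;> push_cast [← @Nat.cast_inj ℤ] at this <;> linear_combination this
  · have hsep : {v ∈ hexReps (p * n) | (p : ℤ) ∣ v.1 ∧ (p : ℤ) ∣ v.2} = hexReps (p * n) :=
      Set.sep_eq_self_iff_mem_true.mpr fun v hv => dvd_of_mem_hexReps hp h hv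
    rw [← hsep, ncard_hexReps_dvd_both hp]
    split_ifs <;> simp [chiThree, h]

theorem ncard_hexReps_one : (hexReps 1).ncard = 6 := by
  have h : hexReps 1 =
      (({(1, 0), (0, 1), (-1, 1), (-1, 0), (0, -1), (1, -1)} : Finset (ℤ × ℤ)) : Set (ℤ × ℤ)) := by
    ext ⟨x, y⟩
    simp only [mem_hexReps, coe_insert, coe_singleton, Set.mem_insert_iff,
      Set.mem_singleton_iff, Prod.mk.injEq]
    constructor
    · intro h
      push_cast at h
      have hx1 : -1 ≤ x := by nlinarith [sq_nonneg (x + 2 * y)]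
      have hx2 : x ≤ 1 := by nlinarith [sq_nonneg (x + 2 * y)]
      have hy1 : -1 ≤ y := by nlinarith [sq_nonneg (2 * x + y)]
      have hy2 : y ≤ 1 := by nlinarith [sq_nonneg (2 * x + y)]
      interval_cases x <;> interval_cases y <;> simp_all
    · rintro (⟨rfl, rfl⟩ | ⟨rfl, rfl⟩ | ⟨rfl, rfl⟩ | ⟨rfl, rfl⟩ | ⟨rfl, rfl⟩ | ⟨rfl, rfl⟩) <;>
        norm_num
  rw [h, Set.ncard_coe_finset]
  rfl

theorem ncard_hexReps_zero : (hexReps 0).ncard = 1 := by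
  rw [Set.ncard_eq_one]
  refine ⟨(0, 0), ?_⟩
  ext ⟨x, y⟩
  simp only [mem_hexReps, Set.mem_singleton_iff, Prod.mk.injEq]
  refine ⟨fun h => ⟨?_, ?_⟩, by rintro ⟨rfl, rfl⟩; norm_num⟩ <;> push_cast at h <;>
    refine pow_eq_zero_iff two_ne_zero |>.mp ?_ <;>
    nlinarith [sq_nonneg (2 * x + y), sq_nonneg (x + 2 * y), sq_nonneg x, sq_nonneg y]

/-! ### Divisor sums -/

theorem sum_divisors_filter_dvd {p n : ℕ} (hp : 0 < p) (f : ℕ → ℤ) :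
    ∑ d ∈ n.divisors with p ∣ d, f d =
      if p ∣ n then ∑ d ∈ (n / p).divisors, f (p * d) else 0 := by
  split_ifs with h
  · obtain ⟨m, rfl⟩ := h
    rw [Nat.mul_div_cancel_left _ hp]
    refine sum_bij' (fun d _ => d / p) (fun d _ => p * d) ?_ ?_ ?_ ?_ ?_ <;>
      simp only [mem_filter, Nat.mem_divisors]
    · rintro d ⟨⟨h1, h2⟩, d, rfl⟩
      rw [Nat.mul_div_cancel_left _ hp]
      exact ⟨Nat.dvd_of_mul_dvd_mul_left hp h1, right_ne_zero_of_mul h2⟩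
    · rintro d ⟨h1, h2⟩
      exact ⟨⟨Nat.mul_dvd_mul_left p h1, mul_ne_zero hp.ne' h2⟩, dvd_mul_right _ _⟩
    · rintro d ⟨-, h⟩
      exact Nat.mul_div_cancel' h
    · intro d _
      exact Nat.mul_div_cancel_left _ hp
    · rintro d ⟨-, h⟩
      rw [Nat.mul_div_cancel' h]
  · refine sum_eq_zero fun d hd => (h ?_).elim
    rw [mem_filter] at hd
    exact hd.2.trans (Nat.dvd_of_mem_divisors hd.1)

theorem sum_divisors_prime_mul {p n : ℕ} (hp : p.Prime) (hn : n ≠ 0) (f : ℕ → ℤ)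
    (hf : ∀ a b, f (a * b) = f a * f b) :
    ∑ d ∈ (p * n).divisors, f d = (1 + f p) * ∑ d ∈ n.divisors, f d -
      f p * if p ∣ n then ∑ d ∈ (n / p).divisors, f d else 0 := by
  have h1 := sum_divisors_filter_dvd (n := p * n) hp.pos f
  have h2 := sum_divisors_filter_dvd (n := n) hp.pos f
  simp only [hf, ← mul_sum] at h1 h2
  rw [if_pos (dvd_mul_right _ _), Nat.mul_div_cancel_left _ hp.pos] at h1
  rw [← mul_ite_zero] at h2
  have h3 : {d ∈ (p * n).divisors | ¬ p ∣ d} = {d ∈ n.divisors | ¬ p ∣ d} := by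
    ext d
    simp only [mem_filter, Nat.mem_divisors, and_congr_left_iff]
    intro hd
    have hcop : d.Coprime p := ((Nat.Prime.coprime_iff_not_dvd hp).mpr hd).symm
    simp [hcop.dvd_mul_left, hn, hp.ne_zero]
  rw [← sum_filter_add_sum_filter_not (p * n).divisors (p ∣ ·), h3, h1]
  have h4 := sum_filter_add_sum_filter_not n.divisors (p ∣ ·) f
  linear_combination h4 - h2

theorem ncard_hexReps {n : ℕ} (hn : n ≠ 0) :
    ((hexReps n).ncard : ℤ) = 6 * ∑ d ∈ n.divisors, chiThree d := by
  induction n using Nat.strong_induction_on with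
  | _ n ih =>
    rcases eq_or_ne n 1 with rfl | h1
    · rw [ncard_hexReps_one]
      simp [chiThree]
    · have hp := Nat.minFac_prime h1
      obtain ⟨m, hm⟩ := Nat.minFac_dvd n
      generalize n.minFac = p at hp hm
      subst hm
      have hm0 : m ≠ 0 := right_ne_zero_of_mul hn
      have hmlt : m < p * m := lt_mul_of_one_lt_left (Nat.pos_of_ne_zero hm0) hp.one_lt
      rw [ncard_hexReps_prime_mul hp, sum_divisors_prime_mul hp hm0 _ chiThree_mul, ih m hmlt hm0]
      split_ifs with hd
      · rw [ih (m / p) ((Nat.div_le_self _ _).trans_lt hmlt)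
          (Nat.div_pos (Nat.le_of_dvd (Nat.pos_of_ne_zero hm0) hd) hp.pos).ne']
        ring
      · ring

/-! ### A Liouville-type identity -/

/-- Quadruples `((a, x), (b, y))` of positive integers with `a * x + b * y = n`. -/
def posQuads (n : ℕ) : Finset ((ℕ × ℕ) × (ℕ × ℕ)) :=
  (antidiagonal n).biUnion fun k => k.1.divisorsAntidiagonal ×ˢ k.2.divisorsAntidiagonal

theorem mem_posQuads {n : ℕ} {q : (ℕ × ℕ) × (ℕ × ℕ)} :
    q ∈ posQuads n ↔ q.1.1 * q.1.2 + q.2.1 * q.2.2 = n ∧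
      0 < q.1.1 ∧ 0 < q.1.2 ∧ 0 < q.2.1 ∧ 0 < q.2.2 := by
  simp only [posQuads, mem_biUnion, HasAntidiagonal.mem_antidiagonal, mem_product,
    Nat.mem_divisorsAntidiagonal, Prod.exists, Nat.pos_iff_ne_zero]
  constructor
  · rintro ⟨k, j, rfl, ⟨rfl, h1⟩, ⟨rfl, h2⟩⟩
    simpa [and_assoc] using And.intro h1 h2
  · rintro ⟨h, h1, h2, h3, h4⟩
    exact ⟨_, _, h, ⟨rfl, mul_ne_zero h1 h2⟩, rfl, mul_ne_zero h3 h4⟩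

theorem sum_posQuads_mul (f : ℕ → ℤ) (n : ℕ) :
    ∑ q ∈ posQuads n, f q.1.1 * f q.2.1 =
      ∑ k ∈ antidiagonal n, (∑ d ∈ k.1.divisors, f d) * ∑ d ∈ k.2.divisors, f d := by
  rw [posQuads, sum_biUnion]
  · refine sum_congr rfl fun k _ => ?_
    rw [← Nat.sum_divisorsAntidiagonal (fun d _ => f d),
      ← Nat.sum_divisorsAntidiagonal (fun d _ => f d), sum_mul_sum, sum_product]
  · intro k _ l _ hkl
    refine Finset.disjoint_left.mpr fun q hq hq' => hkl ?_
    simp only [mem_product, Nat.mem_divisorsAntidiagonal] at hq hq'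
    exact Prod.ext (hq.1.1.symm.trans hq'.1.1) (hq.2.1.symm.trans hq'.2.1)

theorem sum_trichotomy {ι : Type*} (s : Finset ι) (u v : ι → ℕ) (g : ι → ℤ) :
    ∑ i ∈ s, g i = ∑ i ∈ s with u i < v i, g i + ∑ i ∈ s with u i = v i, g i +
      ∑ i ∈ s with v i < u i, g i := by
  simp only [sum_filter, ← sum_add_distrib]
  refine sum_congr rfl fun i _ => ?_
  rcases lt_trichotomy (u i) (v i) with h | h | h
  · simp [h, h.ne, h.not_gt]
  · simp [h]
  · simp [h, h.ne', h.not_gt]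

theorem sum_posQuads_swap (n : ℕ) (g : (ℕ × ℕ) × (ℕ × ℕ) → ℤ)
    (P : (ℕ × ℕ) × (ℕ × ℕ) → Prop) [DecidablePred P] :
    ∑ q ∈ posQuads n with P q, g q = ∑ q ∈ posQuads n with P q.swap, g q.swap := by
  refine sum_bij' (fun q _ => q.swap) (fun q _ => q.swap) ?_ ?_ ?_ ?_ ?_ <;>
    simp only [mem_filter, mem_posQuads, Prod.fst_swap, Prod.snd_swap, Prod.swap_swap, implies_true]
  all_goals
    rintro q ⟨⟨h, h1, h2, h3, h4⟩, hP⟩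
    exact ⟨⟨by rw [add_comm, h], h3, h4, h1, h2⟩, hP⟩

theorem sum_posQuads_sub (n : ℕ) (f : ℤ → ℤ) :
    ∑ q ∈ posQuads n with q.2.1 < q.1.1, f (q.1.1 - q.2.1) =
      ∑ q ∈ posQuads n with q.1.2 < q.2.2, f q.1.1 := by
  refine sum_bij' (fun q _ => ((q.1.1 - q.2.1, q.1.2), (q.2.1, q.1.2 + q.2.2)))
    (fun q _ => ((q.1.1 + q.2.1, q.1.2), (q.2.1, q.2.2 - q.1.2))) ?_ ?_ ?_ ?_ ?_ <;>
    simp only [mem_filter, mem_posQuads] <;>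
    rintro ⟨⟨a, x⟩, b, y⟩ ⟨⟨h, h1, h2, h3, h4⟩, h5⟩ <;> dsimp only at *
  · obtain ⟨c, rfl⟩ := Nat.exists_eq_add_of_lt h5
    refine ⟨⟨?_, by omega, by omega, by omega, by omega⟩, by omega⟩
    rw [← h, show b + c + 1 - b = c + 1 by omega]
    ring
  · obtain ⟨c, rfl⟩ := Nat.exists_eq_add_of_lt h5
    refine ⟨⟨?_, by omega, by omega, by omega, by omega⟩, by omega⟩
    rw [← h, show x + c + 1 - x = c + 1 by omega]
    ring
  · ext <;> dsimp only <;> omega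
  · ext <;> dsimp only <;> omega
  · rw [Nat.cast_sub h5.le]

theorem sum_posQuads_add (n : ℕ) (f : ℤ → ℤ) :
    ∑ q ∈ posQuads n with q.2.2 < q.1.2, f (q.1.1 + q.2.1) =
      ∑ q ∈ posQuads n with q.2.1 < q.1.1, f q.1.1 := by
  refine sum_bij' (fun q _ => ((q.1.1 + q.2.1, q.2.2), (q.1.1, q.1.2 - q.2.2)))
    (fun q _ => ((q.2.1, q.1.2 + q.2.2), (q.1.1 - q.2.1, q.1.2))) ?_ ?_ ?_ ?_ ?_ <;>
    simp only [mem_filter, mem_posQuads] <;>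
    rintro ⟨⟨a, x⟩, b, y⟩ ⟨⟨h, h1, h2, h3, h4⟩, h5⟩ <;> dsimp only at *
  · obtain ⟨c, rfl⟩ := Nat.exists_eq_add_of_lt h5
    refine ⟨⟨?_, by omega, by omega, by omega, by omega⟩, by omega⟩
    rw [← h, show y + c + 1 - y = c + 1 by omega]
    ring
  · obtain ⟨c, rfl⟩ := Nat.exists_eq_add_of_lt h5
    refine ⟨⟨?_, by omega, by omega, by omega, by omega⟩, by omega⟩
    rw [← h, show b + c + 1 - b = c + 1 by omega]
    ring
  · ext <;> dsimp only <;> omega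
  · ext <;> dsimp only <;> omega
  · push_cast; rfl

theorem sum_posQuads_fst (n : ℕ) (f : ℤ → ℤ) :
    ∑ q ∈ posQuads n with q.2.2 < q.1.2, f q.1.1 =
      ∑ q ∈ posQuads n with q.1.1 < q.2.1, f q.1.1 := by
  refine sum_bij' (fun q _ => ((q.1.1, q.1.2 - q.2.2), (q.1.1 + q.2.1, q.2.2)))
    (fun q _ => ((q.1.1, q.1.2 + q.2.2), (q.2.1 - q.1.1, q.2.2))) ?_ ?_ ?_ ?_ ?_ <;>
    simp only [mem_filter, mem_posQuads] <;>
    rintro ⟨⟨a, x⟩, b, y⟩ ⟨⟨h, h1, h2, h3, h4⟩, h5⟩ <;> dsimp only at *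
  · obtain ⟨c, rfl⟩ := Nat.exists_eq_add_of_lt h5
    refine ⟨⟨?_, by omega, by omega, by omega, by omega⟩, by omega⟩
    rw [← h, show y + c + 1 - y = c + 1 by omega]
    ring
  · obtain ⟨c, rfl⟩ := Nat.exists_eq_add_of_lt h5
    refine ⟨⟨?_, by omega, by omega, by omega, by omega⟩, by omega⟩
    rw [← h, show a + c + 1 - a = c + 1 by omega]
    ring
  · ext <;> dsimp only <;> omega
  · ext <;> dsimp only <;> omega

/-- Liouville's identity for an even function `f`. -/
theorem sum_posQuads_even (n : ℕ) (f : ℤ → ℤ) (hf : ∀ k, f (-k) = f k) :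
    ∑ q ∈ posQuads n, (f (q.1.1 - q.2.1) - f (q.1.1 + q.2.1)) =
      ∑ q ∈ posQuads n with q.1.1 = q.2.1, (f 0 + 2 * f q.1.1) -
        ∑ q ∈ posQuads n with q.1.2 = q.2.2, (2 * f q.1.1 + f (q.1.1 + q.2.1)) := by
  have hsub : ∑ q ∈ posQuads n with q.1.1 < q.2.1, f (q.1.1 - q.2.1) =
      ∑ q ∈ posQuads n with q.2.1 < q.1.1, f (q.1.1 - q.2.1) := by
    rw [sum_posQuads_swap]
    refine sum_congr rfl fun q _ => ?_
    rw [Prod.fst_swap, Prod.snd_swap, ← hf, neg_sub]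
  have hadd : ∑ q ∈ posQuads n with q.1.2 < q.2.2, f (q.1.1 + q.2.1) =
      ∑ q ∈ posQuads n with q.2.2 < q.1.2, f (q.1.1 + q.2.1) := by
    rw [sum_posQuads_swap]
    refine sum_congr rfl fun q _ => ?_
    rw [Prod.fst_swap, Prod.snd_swap, add_comm]
  have hdiag : ∑ q ∈ posQuads n with q.1.1 = q.2.1, f (q.1.1 - q.2.1) =
      ∑ q ∈ posQuads n with q.1.1 = q.2.1, f 0 := by
    refine sum_congr rfl fun q hq => ?_
    rw [(mem_filter.mp hq).2, sub_self]
  have e1 := sum_trichotomy (posQuads n) (fun q => q.1.1) (fun q => q.2.1)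
    (fun q => f (q.1.1 - q.2.1))
  have e2 := sum_trichotomy (posQuads n) (fun q => q.1.2) (fun q => q.2.2)
    (fun q => f (q.1.1 + q.2.1))
  have e3 := sum_trichotomy (posQuads n) (fun q => q.1.1) (fun q => q.2.1) (fun q => f q.1.1)
  have e4 := sum_trichotomy (posQuads n) (fun q => q.1.2) (fun q => q.2.2) (fun q => f q.1.1)
  have h1 := sum_posQuads_sub n f
  have h2 := sum_posQuads_add n f
  have h3 := sum_posQuads_fst n f
  rw [sum_sub_distrib, sum_add_distrib, sum_add_distrib, ← mul_sum, ← mul_sum]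
  linarith

theorem sum_posQuads_fst_eq (n : ℕ) (h : ℕ → ℤ) :
    ∑ q ∈ posQuads n with q.1.1 = q.2.1, h q.1.1 =
      ∑ p ∈ n.divisorsAntidiagonal, ((p.2 : ℤ) - 1) * h p.1 := by
  have key : ∑ q ∈ posQuads n with q.1.1 = q.2.1, h q.1.1 =
      ∑ s ∈ n.divisorsAntidiagonal.sigma (fun p => Ioo 0 p.2), h s.1.1 := by
    refine sum_bij' (fun q _ => ⟨(q.1.1, q.1.2 + q.2.2), q.1.2⟩)
      (fun s _ => ((s.1.1, s.2), (s.1.1, s.1.2 - s.2))) ?_ ?_ ?_ ?_ ?_ <;>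
      simp only [mem_filter, mem_posQuads, mem_sigma, Nat.mem_divisorsAntidiagonal, mem_Ioo,
        implies_true]
    · rintro ⟨⟨a, x⟩, b, y⟩ ⟨⟨h, h1, h2, h3, h4⟩, h5⟩
      dsimp only at *
      subst h5
      refine ⟨⟨by rw [← h]; ring, ?_⟩, h2, by omega⟩
      rw [← h]
      positivity
    · rintro ⟨⟨d, e⟩, i⟩ ⟨⟨h, h1⟩, h2, h3⟩
      dsimp only at *
      have : 0 < d := Nat.pos_of_ne_zero (by rintro rfl; simp at h; omega)
      exact ⟨⟨by rw [← mul_add, Nat.add_sub_cancel' h3.le, h], this, h2, this, by omega⟩, trivial⟩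
    · rintro ⟨⟨a, x⟩, b, y⟩ ⟨-, h5⟩
      dsimp only at *
      simp [h5]
    · rintro ⟨⟨d, e⟩, i⟩ ⟨⟨h, h1⟩, h2, h3⟩
      dsimp only at *
      rw [Nat.add_sub_cancel' h3.le]
  rw [key, sum_sigma]
  refine sum_congr rfl fun p hp => ?_
  have : 1 ≤ p.2 := Nat.pos_of_ne_zero (Nat.right_ne_zero_of_mem_divisorsAntidiagonal hp)
  dsimp only
  rw [sum_const, Nat.card_Ioo, nsmul_eq_mul, Nat.sub_zero, Nat.cast_sub this, Nat.cast_one]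

theorem sum_posQuads_snd_eq (n : ℕ) (h : ℕ → ℕ → ℤ) :
    ∑ q ∈ posQuads n with q.1.2 = q.2.2, h q.1.1 (q.1.1 + q.2.1) =
      ∑ p ∈ n.divisorsAntidiagonal, ∑ i ∈ Ioo 0 p.1, h i p.1 := by
  rw [← sum_sigma (s := n.divisorsAntidiagonal) (t := fun p => Ioo 0 p.1)
    (f := fun s => h s.2 s.1.1)]
  refine sum_bij' (fun q _ => ⟨(q.1.1 + q.2.1, q.1.2), q.1.1⟩)
    (fun s _ => ((s.2, s.1.2), (s.1.1 - s.2, s.1.2))) ?_ ?_ ?_ ?_ ?_ <;>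
    simp only [mem_filter, mem_posQuads, mem_sigma, Nat.mem_divisorsAntidiagonal, mem_Ioo,
      implies_true]
  · rintro ⟨⟨a, x⟩, b, y⟩ ⟨⟨h, h1, h2, h3, h4⟩, h5⟩
    dsimp only at *
    subst h5
    refine ⟨⟨by rw [← h]; ring, ?_⟩, h1, by omega⟩
    rw [← h]
    positivity
  · rintro ⟨⟨d, e⟩, i⟩ ⟨⟨h, h1⟩, h2, h3⟩
    dsimp only at *
    have : 0 < e := Nat.pos_of_ne_zero (by rintro rfl; simp at h; omega)
    exact ⟨⟨by rw [← add_mul, Nat.add_sub_cancel' h3.le, h], h2, this, by omega, this⟩, trivial⟩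
  · rintro ⟨⟨a, x⟩, b, y⟩ ⟨-, h5⟩
    dsimp only at *
    simp [h5]
  · rintro ⟨⟨d, e⟩, i⟩ ⟨⟨h, h1⟩, h2, h3⟩
    dsimp only at *
    rw [Nat.add_sub_cancel' h3.le]

/-! ### Sums of two forms -/

/-- Twice the cosine of `2 * π * k / 3`. -/
def cosThree (k : ℤ) : ℤ := if k % 3 = 0 then 2 else -1

theorem cosThree_sub_sub_cosThree_add (a b : ℕ) :
    cosThree (a - b) - cosThree (a + b) = 3 * (chiThree a * chiThree b) := by
  simp only [cosThree, chiThree]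
  split_ifs <;> first | rfl | omega

theorem sum_Ioo_cosThree (d : ℕ) (hd : d ≠ 0) :
    ∑ i ∈ Ioo 0 d, cosThree i = if d % 3 = 0 then -2 else if d % 3 = 1 then 0 else -1 := by
  obtain ⟨d, rfl⟩ := Nat.exists_eq_succ_of_ne_zero hd
  clear hd
  induction d with
  | zero => rfl
  | succ d ih =>
    rw [Nat.succ_eq_add_one] at ih ⊢
    have hIoo : Ioo 0 (d + 1 + 1) = insert (d + 1) (Ioo 0 (d + 1)) := by
      ext i
      simp only [mem_Ioo, mem_insert]
      omega
    rw [hIoo, sum_insert (by simp), ih]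
    simp only [cosThree]
    split_ifs <;> first | rfl | omega

theorem sum_divisors_div_filter_three (n : ℕ) :
    ∑ d ∈ n.divisors with 3 ∣ d, ((n / d : ℕ) : ℤ) = sigmaDiv n 3 := by
  rw [sum_divisors_filter_dvd (by norm_num) (fun d => ((n / d : ℕ) : ℤ)), sigmaDiv]
  simp only [← Nat.div_div_eq_div_mul]
  rw [Nat.sum_div_divisors (n / 3) (fun d => (d : ℤ))]

theorem sum_chiThree_convolution (n : ℕ) :
    3 * ∑ k ∈ antidiagonal n,
      (∑ d ∈ k.1.divisors, chiThree d) * ∑ d ∈ k.2.divisors, chiThree d =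
      sigmaDiv n 1 - 3 * sigmaDiv n 3 - ∑ d ∈ n.divisors, chiThree d := by
  have hL := sum_posQuads_even n cosThree (by intro k; simp only [cosThree]; split_ifs <;> omega)
  simp only [cosThree_sub_sub_cosThree_add, ← mul_sum] at hL
  rw [sum_posQuads_mul] at hL
  have h1 := sum_posQuads_fst_eq n (fun a => cosThree 0 + 2 * cosThree a)
  have h2 := sum_posQuads_snd_eq n (fun a c => 2 * cosThree a + cosThree c)
  push_cast at h1 h2
  rw [h1, h2, ← sum_sub_distrib] at hL
  have hterm : ∀ p ∈ n.divisorsAntidiagonal,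
      ((p.2 : ℤ) - 1) * (cosThree 0 + 2 * cosThree p.1) -
        ∑ i ∈ Ioo 0 p.1, (2 * cosThree i + cosThree p.1) =
      (p.1 : ℤ) - chiThree p.1 + if 3 ∣ p.1 then 6 * (p.2 : ℤ) - 3 * p.1 else 0 := by
    rintro ⟨d, e⟩ hp
    have hd : d ≠ 0 := Nat.left_ne_zero_of_mem_divisorsAntidiagonal hp
    dsimp only
    rw [sum_add_distrib, ← mul_sum, sum_Ioo_cosThree d hd, sum_const, Nat.card_Ioo, nsmul_eq_mul,
      Nat.sub_zero, Nat.cast_sub (Nat.one_le_iff_ne_zero.mpr hd)]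
    have h3 : d % 3 = 0 ∨ d % 3 = 1 ∨ d % 3 = 2 := by omega
    have hcos : cosThree d = if d % 3 = 0 then 2 else -1 := by
      simp only [cosThree]
      split_ifs <;> omega
    have hcos0 : cosThree 0 = 2 := rfl
    rcases h3 with h | h | h <;>
      simp only [hcos, hcos0, chiThree, Nat.dvd_iff_mod_eq_zero, h] <;> norm_num <;> ring
  rw [sum_congr rfl hterm, Nat.sum_divisorsAntidiagonal
    (fun d e => (d : ℤ) - chiThree d + if 3 ∣ d then 6 * (e : ℤ) - 3 * d else 0),
    sum_add_distrib, sum_sub_distrib, ← sum_filter, sum_sub_distrib, ← mul_sum, ← mul_sum,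
    sum_divisors_div_filter_three, sum_divisors_filter_dvd (by norm_num) (fun d => (d : ℤ))] at hL
  rw [hL]
  simp only [sigmaDiv, one_dvd, if_true, Nat.div_one]
  push_cast [← mul_sum]
  split_ifs <;> ring

theorem sum_ncard_hexReps {n : ℕ} (hn : n ≠ 0) :
    ∑ k ∈ antidiagonal n, ((hexReps k.1).ncard : ℤ) * (hexReps k.2).ncard =
      12 * (sigmaDiv n 1 - 3 * sigmaDiv n 3) := by
  have hr : ∀ k, ((hexReps k).ncard : ℤ) =
      6 * ∑ d ∈ k.divisors, chiThree d + if k = 0 then 1 else 0 := by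
    intro k
    rcases eq_or_ne k 0 with rfl | hk
    · simp [ncard_hexReps_zero]
    · simp [ncard_hexReps hk, hk]
  set δ : ℕ → ℤ := fun k => ∑ d ∈ k.divisors, chiThree d with hδ
  have hconv := sum_chiThree_convolution n
  have hterm : ∀ k ∈ antidiagonal n, ((hexReps k.1).ncard : ℤ) * (hexReps k.2).ncard =
      36 * (δ k.1 * δ k.2) + ((if k.1 = 0 then 6 * δ n else 0) +
        if k.2 = 0 then 6 * δ n else 0) := by
    rintro ⟨k, j⟩ hk
    rw [HasAntidiagonal.mem_antidiagonal] at hk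
    dsimp only at hk ⊢
    rw [hr, hr]
    split_ifs with h1 h2 h2
    · omega
    · subst h1; simp [← hk, hδ]
    · subst h2; simp [← hk, hδ]
    · simp only [hδ]; ring
  rw [sum_congr rfl hterm, sum_add_distrib, sum_add_distrib, ← mul_sum]
  have e1 : ∑ k ∈ antidiagonal n, (if k.1 = 0 then 6 * δ n else 0) = 6 * δ n := by
    rw [Nat.sum_antidiagonal_eq_sum_range_succ (fun i _ => if i = 0 then 6 * δ n else 0)]
    simp
  have e2 : ∑ k ∈ antidiagonal n, (if k.2 = 0 then 6 * δ n else 0) = 6 * δ n := by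
    rw [← Nat.sum_antidiagonal_swap]
    exact e1
  rw [e1, e2]
  linear_combination 12 * hconv

/-- Pairs of vectors with norms summing to `n` are counted by a convolution. -/
theorem ncard_hex_add_hex (n : ℕ) (P Q : ℤ × ℤ → Prop) :
    {x : Fin 4 → ℤ | x 0 ^ 2 + x 0 * x 1 + x 1 ^ 2 + x 2 ^ 2 + x 2 * x 3 + x 3 ^ 2 = (n : ℤ) ∧
      P (x 0, x 1) ∧ Q (x 2, x 3)}.ncard =
      ∑ k ∈ antidiagonal n, {v ∈ hexReps k.1 | P v}.ncard * {v ∈ hexReps k.2 | Q v}.ncard := by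
  classical
  have hP : ∀ k, {v ∈ hexReps k | P v}.Finite := fun k =>
    (hexReps_finite k).subset (Set.sep_subset _ _)
  have hQ : ∀ k, {v ∈ hexReps k | Q v}.Finite := fun k =>
    (hexReps_finite k).subset (Set.sep_subset _ _)
  have himage : {x : Fin 4 → ℤ |
      x 0 ^ 2 + x 0 * x 1 + x 1 ^ 2 + x 2 ^ 2 + x 2 * x 3 + x 3 ^ 2 = (n : ℤ) ∧
      P (x 0, x 1) ∧ Q (x 2, x 3)} =
      (fun w : (ℤ × ℤ) × (ℤ × ℤ) => ![w.1.1, w.1.2, w.2.1, w.2.2]) ''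
      ((antidiagonal n).biUnion fun k => (hP k.1).toFinset ×ˢ (hQ k.2).toFinset :
        Finset ((ℤ × ℤ) × (ℤ × ℤ))) := by
    ext x
    simp only [Set.mem_ofPred_eq, Set.mem_image, mem_coe, mem_biUnion,
      HasAntidiagonal.mem_antidiagonal, mem_product, Set.Finite.mem_toFinset, mem_hexReps]
    constructor
    · rintro ⟨h, hp, hq⟩
      have h1 : 0 ≤ x 0 ^ 2 + x 0 * x 1 + x 1 ^ 2 := by
        nlinarith [sq_nonneg (2 * x 0 + x 1), sq_nonneg (x 1)]
      have h2 : 0 ≤ x 2 ^ 2 + x 2 * x 3 + x 3 ^ 2 := by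
        nlinarith [sq_nonneg (2 * x 2 + x 3), sq_nonneg (x 3)]
      obtain ⟨k, hk⟩ := Int.eq_ofNat_of_zero_le h1
      obtain ⟨j, hj⟩ := Int.eq_ofNat_of_zero_le h2
      refine ⟨((x 0, x 1), (x 2, x 3)), ⟨(k, j), ?_, ⟨hk, hp⟩, hj, hq⟩, ?_⟩
      · dsimp only
        zify
        linear_combination h - hk - hj
      · ext i
        fin_cases i <;> rfl
    · rintro ⟨⟨u, v⟩, ⟨⟨k, j⟩, hkj, ⟨hk, hp⟩, hj, hq⟩, rfl⟩
      dsimp only at hkj hk hj hp hq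
      subst hkj
      refine ⟨?_, hp, hq⟩
      push_cast
      linear_combination hk + hj
  rw [himage, Set.ncard_image_of_injective, Set.ncard_coe_finset, card_biUnion]
  · refine sum_congr rfl fun k _ => ?_
    rw [card_product, Set.ncard_eq_toFinset_card _ (hP k.1), Set.ncard_eq_toFinset_card _ (hQ k.2)]
  · intro k _ l _ hkl
    refine Finset.disjoint_left.mpr fun w hw hw' => hkl ?_
    simp only [mem_product, Set.Finite.mem_toFinset, Set.mem_ofPred_eq, mem_hexReps] at hw hw'
    refine Prod.ext ?_ ?_ <;> zify
    · exact hw.1.1.symm.trans hw'.1.1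
    · exact hw.2.1.symm.trans hw'.2.1
  · rintro ⟨⟨a, b⟩, c, d⟩ ⟨⟨a', b'⟩, c', d'⟩ h
    have h0 := congrFun h 0
    have h1 := congrFun h 1
    have h2 := congrFun h 2
    have h3 := congrFun h 3
    simp_all

theorem hexReps_parity {n : ℕ} {v : ℤ × ℤ} (hv : v ∈ hexReps n) :
    n % 2 = 0 ↔ v.1 % 2 = 0 ∧ v.2 % 2 = 0 := by
  constructor
  · intro h
    obtain ⟨m, rfl⟩ := Nat.dvd_of_mod_eq_zero h
    obtain ⟨h1, h2⟩ := dvd_of_mem_hexReps Nat.prime_two rfl hv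
    exact ⟨Int.emod_eq_zero_of_dvd h1, Int.emod_eq_zero_of_dvd h2⟩
  · rintro ⟨h1, h2⟩
    rw [mem_hexReps] at hv
    obtain ⟨a, ha⟩ := Int.dvd_of_emod_eq_zero h1
    obtain ⟨b, hb⟩ := Int.dvd_of_emod_eq_zero h2
    rw [ha, hb] at hv
    have : (n : ℤ) = 2 * (2 * (a ^ 2 + a * b + b ^ 2)) := by linear_combination -hv
    omega

theorem ncard_hexReps_even (n : ℕ) :
    {v ∈ hexReps n | v.1 % 2 = 0 ∧ v.2 % 2 = 0}.ncard =
      if n % 2 = 0 then (hexReps n).ncard else 0 := by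
  split_ifs with h
  · rw [Set.sep_eq_self_iff_mem_true.mpr fun v hv => (hexReps_parity hv).mp h]
  · rw [Set.sep_eq_empty_iff_mem_false.mpr fun v hv hv' => h ((hexReps_parity hv).mpr hv'),
      Set.ncard_empty]

/-- The rotation of order six acts transitively on the three nonzero classes modulo `2`. -/
theorem three_mul_ncard_hexReps_odd_even (n : ℕ) :
    3 * {v ∈ hexReps n | v.1 % 2 = 1 ∧ v.2 % 2 = 0}.ncard =
      if n % 2 = 1 then (hexReps n).ncard else 0 := by
  split_ifs with h
  · have hrot : ∀ a b : ℤ, {v ∈ hexReps n | -v.2 % 2 = a ∧ (v.1 + v.2) % 2 = b}.ncard =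
        {v ∈ hexReps n | v.1 % 2 = a ∧ v.2 % 2 = b}.ncard := by
      intro a b
      refine Set.ncard_congr (fun v _ => (-v.2, v.1 + v.2)) ?_ ?_ ?_
      · rintro ⟨x, y⟩ ⟨h1, h2⟩
        refine ⟨?_, h2⟩
        rw [mem_hexReps] at h1 ⊢
        linear_combination h1
      · rintro ⟨x, y⟩ ⟨x', y'⟩ - - h
        simp only [Prod.mk.injEq] at h ⊢
        omega
      · rintro ⟨x, y⟩ ⟨h1, h2⟩
        refine ⟨(x + y, -x), ⟨?_, ?_⟩, ?_⟩
        · rw [mem_hexReps] at h1 ⊢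
          linear_combination h1
        · simpa using h2
        · simp
    have h01 : {v ∈ hexReps n | v.1 % 2 = 1 ∧ v.2 % 2 = 0}.ncard =
        {v ∈ hexReps n | v.1 % 2 = 0 ∧ v.2 % 2 = 1}.ncard := by
      rw [← hrot 0 1]
      refine congrArg Set.ncard (Set.ext fun v => and_congr_right fun _ => ?_)
      omega
    have h11 : {v ∈ hexReps n | v.1 % 2 = 0 ∧ v.2 % 2 = 1}.ncard =
        {v ∈ hexReps n | v.1 % 2 = 1 ∧ v.2 % 2 = 1}.ncard := by
      rw [← hrot 1 1]
      refine congrArg Set.ncard (Set.ext fun v => and_congr_right fun _ => ?_)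
      omega
    have hfin : ∀ P : ℤ × ℤ → Prop, {v ∈ hexReps n | P v}.Finite := fun P =>
      (hexReps_finite n).subset (Set.sep_subset _ _)
    have hsplit : hexReps n = ({v ∈ hexReps n | v.1 % 2 = 1 ∧ v.2 % 2 = 0} ∪
        {v ∈ hexReps n | v.1 % 2 = 0 ∧ v.2 % 2 = 1}) ∪
        {v ∈ hexReps n | v.1 % 2 = 1 ∧ v.2 % 2 = 1} := by
      rw [← Set.sep_or, ← Set.sep_or]
      refine (Set.sep_eq_self_iff_mem_true.mpr fun v hv => ?_).symm
      have := hexReps_parity hv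
      omega
    conv_rhs => rw [hsplit]
    rw [Set.ncard_union_eq _ ((hfin _).union (hfin _)) (hfin _),
      Set.ncard_union_eq _ (hfin _) (hfin _), ← h11, ← h01]
    · ring
    · refine Set.disjoint_left.mpr fun v hv hv' => ?_
      have := hv.2
      have := hv'.2
      omega
    · refine Set.disjoint_left.mpr fun v hv hv' => ?_
      have := hv'.2
      rcases hv with hv | hv <;> have := hv.2 <;> omega
  · rw [Set.sep_eq_empty_iff_mem_false.mpr fun v hv hv' => ?_, Set.ncard_empty]
    have := hexReps_parity hv
    omega

theorem sigmaDiv_two_mul {m : ℕ} (hm : m ≠ 0) :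
    sigmaDiv (2 * m) 1 = 3 * sigmaDiv m 1 - 2 * sigmaDiv m 2 := by
  have h := sum_divisors_prime_mul Nat.prime_two hm (fun d => (d : ℤ)) (by simp)
  simp only [sigmaDiv, one_dvd, if_true, Nat.div_one]
  rw [h]
  norm_num

theorem sigmaDiv_mul_mul {k : ℕ} (hk : 0 < k) (m j : ℕ) :
    sigmaDiv (k * m) (k * j) = sigmaDiv m j := by
  simp only [sigmaDiv, Nat.mul_dvd_mul_iff_left hk, Nat.mul_div_mul_left _ _ hk]

theorem sigmaDiv_eq_zero {n k : ℕ} (h : ¬ k ∣ n) : sigmaDiv n k = 0 := if_neg h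

theorem sigmaDiv_two_mul_three {m : ℕ} (hm : m ≠ 0) :
    sigmaDiv (2 * m) 3 = 3 * sigmaDiv m 3 - 2 * sigmaDiv m 6 := by
  by_cases h : 3 ∣ m
  · obtain ⟨l, rfl⟩ := h
    have := sigmaDiv_two_mul (right_ne_zero_of_mul hm)
    rw [← sigmaDiv_mul_mul three_pos, ← sigmaDiv_mul_mul three_pos l,
      ← sigmaDiv_mul_mul three_pos l] at this
    rwa [mul_left_comm]
  · rw [sigmaDiv_eq_zero h, sigmaDiv_eq_zero (k := 3), sigmaDiv_eq_zero (k := 6)]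
    · norm_num
    · exact fun h' => h (dvd_trans (by norm_num) h')
    · exact fun h' => h ((Nat.Coprime.dvd_mul_left (by norm_num)).mp h')

theorem rep_sum_two_hex_forms_1000_mod2 (n : ℕ) (hn : 0 < n) :
    ({x : Fin 4 → ℤ | x 0 ^ 2 + x 0 * x 1 + x 1 ^ 2 + x 2 ^ 2 + x 2 * x 3 + x 3 ^ 2 = (n : ℤ) ∧
        x 0 % 2 = 1 ∧ x 1 % 2 = 0 ∧ x 2 % 2 = 0 ∧ x 3 % 2 = 0}.ncard : ℤ) =
      2 * sigmaDiv n 1 - 6 * sigmaDiv n 2 - 6 * sigmaDiv n 3 + 4 * sigmaDiv n 4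
        + 18 * sigmaDiv n 6 - 12 * sigmaDiv n 12 := by
  have hcount := ncard_hex_add_hex n (fun v => v.1 % 2 = 1 ∧ v.2 % 2 = 0)
    (fun v => v.1 % 2 = 0 ∧ v.2 % 2 = 0)
  simp only [and_assoc] at hcount
  have hthree : (3 * ∑ k ∈ antidiagonal n,
      {v ∈ hexReps k.1 | v.1 % 2 = 1 ∧ v.2 % 2 = 0}.ncard *
        {v ∈ hexReps k.2 | v.1 % 2 = 0 ∧ v.2 % 2 = 0}.ncard) =
      ∑ k ∈ antidiagonal n, if k.1 % 2 = 1 ∧ k.2 % 2 = 0 then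
        (hexReps k.1).ncard * (hexReps k.2).ncard else 0 := by
    rw [mul_sum]
    refine sum_congr rfl fun k _ => ?_
    rw [← mul_assoc, three_mul_ncard_hexReps_odd_even, ncard_hexReps_even, ite_zero_mul_ite_zero]
  rw [hcount]
  rcases Nat.even_or_odd' n with ⟨m, rfl | hm⟩
  · have hzero : ∑ k ∈ antidiagonal (2 * m), (if k.1 % 2 = 1 ∧ k.2 % 2 = 0 then
        (hexReps k.1).ncard * (hexReps k.2).ncard else 0) = 0 := by
      refine sum_eq_zero fun k hk => if_neg ?_
      rw [HasAntidiagonal.mem_antidiagonal] at hk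
      omega
    have hm : m ≠ 0 := by omega
    have h2 := sigmaDiv_mul_mul two_pos m 1
    have h4 := sigmaDiv_mul_mul two_pos m 2
    have h6 := sigmaDiv_mul_mul two_pos m 3
    have h12 := sigmaDiv_mul_mul two_pos m 6
    norm_num only at h2 h4 h6 h12
    rw [sigmaDiv_two_mul hm, sigmaDiv_two_mul_three hm, h2, h4, h6, h12]
    have : ∑ k ∈ antidiagonal (2 * m), {v ∈ hexReps k.1 | v.1 % 2 = 1 ∧ v.2 % 2 = 0}.ncard *
        {v ∈ hexReps k.2 | v.1 % 2 = 0 ∧ v.2 % 2 = 0}.ncard = 0 := by omega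
    rw [this]
    push_cast
    ring
  · have hswap : ∑ k ∈ antidiagonal n, (if k.1 % 2 = 1 ∧ k.2 % 2 = 0 then
        (hexReps k.1).ncard * (hexReps k.2).ncard else 0) =
        ∑ k ∈ antidiagonal n, (if k.2 % 2 = 1 ∧ k.1 % 2 = 0 then
        (hexReps k.1).ncard * (hexReps k.2).ncard else 0) := by
      rw [← Nat.sum_antidiagonal_swap]
      simp only [Prod.fst_swap, Prod.snd_swap, mul_comm]
    have hsum : ∑ k ∈ antidiagonal n, (hexReps k.1).ncard * (hexReps k.2).ncard =
        ∑ k ∈ antidiagonal n, (if k.1 % 2 = 1 ∧ k.2 % 2 = 0 then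
          (hexReps k.1).ncard * (hexReps k.2).ncard else 0) +
        ∑ k ∈ antidiagonal n, (if k.2 % 2 = 1 ∧ k.1 % 2 = 0 then
          (hexReps k.1).ncard * (hexReps k.2).ncard else 0) := by
      rw [← sum_add_distrib]
      refine sum_congr rfl fun k hk => ?_
      rw [HasAntidiagonal.mem_antidiagonal] at hk
      split_ifs <;> omega
    rw [← hswap, ← hthree] at hsum
    have htotal := sum_ncard_hexReps hn.ne'
    zify at hsum
    rw [hsum] at htotal
    rw [sigmaDiv_eq_zero (k := 2) (by omega), sigmaDiv_eq_zero (k := 4) (by omega),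
      sigmaDiv_eq_zero (k := 6) (by omega), sigmaDiv_eq_zero (k := 12) (by omega)]
    push_cast
    linarith
end

section
/- For every positive integer n, the number of quadruples (x₁, x₂, x₃, x₄) ∈ ℤ⁴ with x₁² + x₂² + x₃² + x₄² = n, x₁ ≡ x₂ ≡ x₃ ≡ 1 (mod 3), and x₄ ≡ 0 (mod 3) equals σ(n/3) − σ(n/9) − 4σ(n/12) + 4σ(n/36). -/
open Finset

lemma mem_Icc_neg_of_sq_le {x k : ℤ} (h : x ^ 2 ≤ k) : x ∈ Icc (-k) k := by
  rw [mem_Icc]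
  constructor <;> nlinarith [Int.le_self_sq x, Int.le_self_sq (-x)]

/-- The quadruples of integers whose squares sum to `k`. -/
noncomputable def fourSqReps (k : ℤ) : Finset (ℤ × ℤ × ℤ × ℤ) :=
  (Icc (-k) k ×ˢ Icc (-k) k ×ˢ Icc (-k) k ×ˢ Icc (-k) k).filter
    fun x ↦ x.1 ^ 2 + x.2.1 ^ 2 + x.2.2.1 ^ 2 + x.2.2.2 ^ 2 = k

lemma mem_fourSqReps {k : ℤ} {x : ℤ × ℤ × ℤ × ℤ} :
    x ∈ fourSqReps k ↔ x.1 ^ 2 + x.2.1 ^ 2 + x.2.2.1 ^ 2 + x.2.2.2 ^ 2 = k := by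
  simp only [fourSqReps, mem_filter, mem_product, and_iff_right_iff_imp]
  intro h
  have h₀ := sq_nonneg x.1
  have h₁ := sq_nonneg x.2.1
  have h₂ := sq_nonneg x.2.2.1
  have h₃ := sq_nonneg x.2.2.2
  refine ⟨?_, ?_, ?_, ?_⟩ <;> exact mem_Icc_neg_of_sq_le (by linarith)

/-- The quadruples of odd integers whose squares sum to `k`. -/
noncomputable def oddFourSqReps (k : ℤ) : Finset (ℤ × ℤ × ℤ × ℤ) :=
  (fourSqReps k).filter fun x ↦ Odd x.1 ∧ Odd x.2.1 ∧ Odd x.2.2.1 ∧ Odd x.2.2.2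

/-- The pairs of positive integers `(d, e)` with `4 * d * e = k`. -/
noncomputable def posFactorPairs (k : ℤ) : Finset (ℤ × ℤ) :=
  (Icc 1 k ×ˢ Icc 1 k).filter fun x ↦ 4 * x.1 * x.2 = k

lemma mem_posFactorPairs {k : ℤ} {x : ℤ × ℤ} :
    x ∈ posFactorPairs k ↔ 0 < x.1 ∧ 0 < x.2 ∧ 4 * x.1 * x.2 = k := by
  simp only [posFactorPairs, mem_filter, mem_product, mem_Icc]
  constructor
  · rintro ⟨⟨⟨h₁, -⟩, h₂, -⟩, h⟩
    exact ⟨h₁, h₂, h⟩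
  · rintro ⟨h₁, h₂, h⟩
    refine ⟨⟨⟨h₁, ?_⟩, h₂, ?_⟩, h⟩ <;> nlinarith

/-- The triples `(i, d, e)` with `d, e > 0` and `i ^ 2 + 4 * d * e = N`. -/
noncomputable def windmills (N : ℤ) : Finset (ℤ × ℤ × ℤ) :=
  (Icc (-N) N ×ˢ Icc 1 N ×ˢ Icc 1 N).filter fun x ↦ x.1 ^ 2 + 4 * x.2.1 * x.2.2 = N

lemma mem_windmills {N : ℤ} {x : ℤ × ℤ × ℤ} :
    x ∈ windmills N ↔ 0 < x.2.1 ∧ 0 < x.2.2 ∧ x.1 ^ 2 + 4 * x.2.1 * x.2.2 = N := by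
  simp only [windmills, mem_filter, mem_product]
  constructor
  · rintro ⟨⟨-, h₁, h₂⟩, h⟩
    rw [mem_Icc] at h₁ h₂
    exact ⟨h₁.1, h₂.1, h⟩
  · rintro ⟨h₁, h₂, h⟩
    refine ⟨⟨mem_Icc_neg_of_sq_le (by nlinarith [mul_pos h₁ h₂]), mem_Icc.2 ⟨h₁, ?_⟩,
      mem_Icc.2 ⟨h₂, ?_⟩⟩, h⟩ <;> nlinarith [sq_nonneg x.1]

lemma sum_windmills_flip {N : ℤ} :
    ∑ x ∈ windmills N, x.1 * (x.2.1 ^ 2 - x.2.2 ^ 2) = 0 := by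
  have h : ∑ x ∈ windmills N, x.1 * (x.2.1 ^ 2 - x.2.2 ^ 2) =
      ∑ x ∈ windmills N, -(x.1 * (x.2.1 ^ 2 - x.2.2 ^ 2)) := by
    refine sum_nbij' (fun x ↦ (-x.1, x.2)) (fun x ↦ (-x.1, x.2)) ?_ ?_ ?_ ?_ ?_ <;>
      simp [mem_windmills]
  rw [sum_neg_distrib] at h
  linarith

/-- The summand changes sign under the piecewise linear involution of the windmills of `N` that fixes
`d` when `i + d < e` and fixes `e` when `e < i + d`. -/
lemma sum_windmills_reduction {N : ℤ} (hN : ¬IsSquare N) :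
    ∑ x ∈ windmills N, ((x.2.1 * x.2.2 - x.1 ^ 2) * (x.2.1 + x.2.2) -
      x.1 * (x.2.1 ^ 2 - x.2.2 ^ 2)) = 0 := by
  have hne : ∀ x ∈ windmills N, x.1 + x.2.1 ≠ x.2.2 := by
    intro x hx h
    rw [mem_windmills] at hx
    exact hN ⟨x.1 + 2 * x.2.1, by rw [← hx.2.2, ← h]; ring⟩
  have key : ∀ x : ℤ × ℤ × ℤ, ∀ f : ℤ × ℤ × ℤ → ℤ,
      f = (fun x ↦ (x.2.1 * x.2.2 - x.1 ^ 2) * (x.2.1 + x.2.2) - x.1 * (x.2.1 ^ 2 - x.2.2 ^ 2)) →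
      f x + f (if x.1 + x.2.1 < x.2.2 then (-x.1 - 2 * x.2.1, x.2.1, x.2.2 - x.1 - x.2.1)
        else (2 * x.2.2 - x.1, x.2.1 + x.1 - x.2.2, x.2.2)) = 0 := by
    rintro x f rfl
    dsimp only
    split_ifs <;> ring
  refine sum_involution (fun x _ ↦ if x.1 + x.2.1 < x.2.2 then
      (-x.1 - 2 * x.2.1, x.2.1, x.2.2 - x.1 - x.2.1)
    else (2 * x.2.2 - x.1, x.2.1 + x.1 - x.2.2, x.2.2))
    (fun x _ ↦ key x _ rfl) (fun x _ hx h ↦ hx ?_) (fun x hx ↦ ?_) (fun x hx ↦ ?_)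
  · have := key x _ rfl
    rw [h] at this
    linarith
  · have := hne x hx
    rw [mem_windmills] at hx ⊢
    obtain ⟨h₁, h₂, h₃⟩ := hx
    split_ifs with h
    · exact ⟨h₁, by dsimp only; linarith, by rw [← h₃]; ring⟩
    · exact ⟨by dsimp only; lia, h₂, by rw [← h₃]; ring⟩
  · rw [mem_windmills] at hx
    have := hne x (mem_windmills.2 hx)
    obtain ⟨i, d, e⟩ := x
    dsimp only at *
    split_ifs with h h' h' <;>
      first
      | (exfalso; dsimp only at h'; lia)
      | (ext <;> dsimp only <;> ring)

lemma sum_windmills_eq_zero {N : ℤ} (hN : ¬IsSquare N) :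
    ∑ x ∈ windmills N, (N - 5 * x.1 ^ 2) * x.2.1 = 0 := by
  have hswap : ∑ x ∈ windmills N, (N - 5 * x.1 ^ 2) * x.2.1 =
      ∑ x ∈ windmills N, (N - 5 * x.1 ^ 2) * x.2.2 := by
    refine sum_nbij' (fun x ↦ (x.1, x.2.2, x.2.1)) (fun x ↦ (x.1, x.2.2, x.2.1)) ?_ ?_ ?_ ?_ ?_ <;>
      simp +contextual [mem_windmills, mul_right_comm]
  have h := sum_windmills_reduction hN
  rw [sum_sub_distrib, sum_windmills_flip, sub_zero] at h
  have h' : ∑ x ∈ windmills N, ((N - 5 * x.1 ^ 2) * x.2.1 + (N - 5 * x.1 ^ 2) * x.2.2) =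
      4 * ∑ x ∈ windmills N, (x.2.1 * x.2.2 - x.1 ^ 2) * (x.2.1 + x.2.2) := by
    rw [mul_sum]
    refine sum_congr rfl fun x hx ↦ ?_
    rw [mem_windmills] at hx
    rw [← hx.2.2]
    ring
  rw [sum_add_distrib, h] at h'
  linarith

lemma sum_posFactorPairs_recursion {N : ℤ} (hN : ¬IsSquare N) :
    ∑ i ∈ Icc (-N) N, (N - 5 * i ^ 2) * ∑ y ∈ posFactorPairs (N - i ^ 2), y.1 = 0 := by
  rw [← sum_windmills_eq_zero hN, sum_finset_product (windmills N) (Icc (-N) N)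
    fun i ↦ posFactorPairs (N - i ^ 2)]
  · simp only [mul_sum]
  · intro x
    simp only [mem_windmills, mem_posFactorPairs, eq_sub_iff_add_eq']
    refine ⟨fun h ↦ ⟨mem_Icc_neg_of_sq_le ?_, h⟩, And.right⟩
    nlinarith [mul_pos h.1 h.2.1]

/-- Summing `N - 5 * i ^ 2` over all ways to write `N` as a sum of five odd squares gives zero, by
symmetry in the five variables. -/
lemma sum_oddFourSqReps_recursion (N : ℤ) :
    ∑ i ∈ (Icc (-N) N).filter Odd, (N - 5 * i ^ 2) * (#(oddFourSqReps (N - i ^ 2)) : ℤ) = 0 := by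
  set T : Finset (ℤ × ℤ × ℤ × ℤ × ℤ) := ((Icc (-N) N).filter Odd).biUnion fun i ↦
    (oddFourSqReps (N - i ^ 2)).map ⟨Prod.mk i, Prod.mk_right_injective i⟩ with hT
  have mem_T : ∀ x, x ∈ T ↔
      x.1 ^ 2 + x.2.1 ^ 2 + x.2.2.1 ^ 2 + x.2.2.2.1 ^ 2 + x.2.2.2.2 ^ 2 = N ∧
      Odd x.1 ∧ Odd x.2.1 ∧ Odd x.2.2.1 ∧ Odd x.2.2.2.1 ∧ Odd x.2.2.2.2 := by
    rintro ⟨i, x⟩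
    simp only [hT, oddFourSqReps, mem_biUnion, mem_map, mem_filter, mem_fourSqReps,
      Function.Embedding.coeFn_mk, Prod.mk.injEq]
    constructor
    · rintro ⟨_, ⟨-, hi⟩, _, ⟨h, ho⟩, rfl, rfl⟩
      exact ⟨by linarith, hi, ho⟩
    · rintro ⟨h, hi, ho⟩
      have h₀ := sq_nonneg x.1
      have h₁ := sq_nonneg x.2.1
      have h₂ := sq_nonneg x.2.2.1
      have h₃ := sq_nonneg x.2.2.2
      exact ⟨i, ⟨mem_Icc_neg_of_sq_le (by linarith), hi⟩, x, ⟨by linarith, ho⟩, rfl, rfl⟩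
  have hsum : ∑ x ∈ T, (N - 5 * x.1 ^ 2) = 0 := by
    have e₁ : ∑ x ∈ T, x.1 ^ 2 = ∑ x ∈ T, x.2.1 ^ 2 := by
      refine sum_nbij' (fun x ↦ (x.2.1, x.1, x.2.2))
        (fun x ↦ (x.2.1, x.1, x.2.2))
        ?_ ?_ ?_ ?_ ?_ <;> grind
    have e₂ : ∑ x ∈ T, x.1 ^ 2 = ∑ x ∈ T, x.2.2.1 ^ 2 := by
      refine sum_nbij' (fun x ↦ (x.2.2.1, x.2.1, x.1, x.2.2.2))
        (fun x ↦ (x.2.2.1, x.2.1, x.1, x.2.2.2))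
        ?_ ?_ ?_ ?_ ?_ <;> grind
    have e₃ : ∑ x ∈ T, x.1 ^ 2 = ∑ x ∈ T, x.2.2.2.1 ^ 2 := by
      refine sum_nbij' (fun x ↦ (x.2.2.2.1, x.2.1, x.2.2.1, x.1, x.2.2.2.2))
        (fun x ↦ (x.2.2.2.1, x.2.1, x.2.2.1, x.1, x.2.2.2.2))
        ?_ ?_ ?_ ?_ ?_ <;> grind
    have e₄ : ∑ x ∈ T, x.1 ^ 2 = ∑ x ∈ T, x.2.2.2.2 ^ 2 := by
      refine sum_nbij' (fun x ↦ (x.2.2.2.2, x.2.1, x.2.2.1, x.2.2.2.1, x.1))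
        (fun x ↦ (x.2.2.2.2, x.2.1, x.2.2.1, x.2.2.2.1, x.1))
        ?_ ?_ ?_ ?_ ?_ <;> grind
    have e : ∑ x ∈ T, N = ∑ x ∈ T,
        (x.1 ^ 2 + x.2.1 ^ 2 + x.2.2.1 ^ 2 + x.2.2.2.1 ^ 2 + x.2.2.2.2 ^ 2) :=
      sum_congr rfl fun x hx ↦ ((mem_T x).1 hx).1.symm
    simp only [sum_add_distrib] at e
    rw [sum_sub_distrib, ← mul_sum]
    linarith
  rw [← hsum, hT, sum_biUnion]
  · refine sum_congr rfl fun i _ ↦ ?_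
    simp only [sum_map, Function.Embedding.coeFn_mk, sum_const, nsmul_eq_mul, mul_comm]
  · intro i _ j _ hij
    simp only [Function.onFun, disjoint_left, mem_map, Function.Embedding.coeFn_mk]
    rintro _ ⟨x, -, rfl⟩ ⟨y, -, hy⟩
    exact hij (congrArg Prod.fst hy).symm

lemma oddFourSqReps_of_neg {k : ℤ} (hk : k < 0) : oddFourSqReps k = ∅ := by
  simp only [oddFourSqReps, eq_empty_iff_forall_notMem, mem_filter, mem_fourSqReps]
  rintro x ⟨h, -⟩
  have : 0 ≤ k := h ▸ by positivity
  lia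

lemma posFactorPairs_of_neg {k : ℤ} (hk : k < 0) : posFactorPairs k = ∅ := by
  simp only [posFactorPairs, Icc_eq_empty (show ¬ 1 ≤ k by lia), empty_product, filter_empty]

lemma card_oddFourSqReps_four : #(oddFourSqReps 4) = 16 := by
  have : oddFourSqReps 4 =
      ({1, -1} : Finset ℤ) ×ˢ ({1, -1} : Finset ℤ) ×ˢ ({1, -1} : Finset ℤ) ×ˢ {1, -1} := by
    ext ⟨a, b, c, d⟩
    simp only [oddFourSqReps, mem_filter, mem_fourSqReps, mem_product, mem_insert, mem_singleton]
    constructor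
    · rintro ⟨h, ha, hb, hc, hd⟩
      have pos : ∀ {t : ℤ}, Odd t → 1 ≤ t ^ 2 := fun {t} ht ↦
        Int.add_one_le_iff.2 (sq_pos_of_ne_zero fun h ↦ by simp [h] at ht)
      have := pos ha
      have := pos hb
      have := pos hc
      have := pos hd
      simp only [← sq_eq_one_iff]
      refine ⟨?_, ?_, ?_, ?_⟩ <;> linarith
    · rintro ⟨rfl | rfl, rfl | rfl, rfl | rfl, rfl | rfl⟩ <;> decide
  rw [this]
  rfl

lemma sum_posFactorPairs_four : ∑ y ∈ posFactorPairs 4, y.1 = 1 := by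
  have : posFactorPairs 4 = {(1, 1)} := by
    ext ⟨a, b⟩
    simp only [mem_posFactorPairs, mem_singleton, Prod.mk.injEq]
    constructor
    · rintro ⟨ha, hb, h⟩
      constructor <;> nlinarith
    · rintro ⟨rfl, rfl⟩
      decide
  simp [this]

/-- Both sides satisfy the same recursion, which determines them from their value at `4`. -/
lemma card_oddFourSqReps (k : ℤ) (hk : k % 8 = 4) :
    (#(oddFourSqReps k) : ℤ) = 16 * ∑ y ∈ posFactorPairs k, y.1 := by
  induction' hm : k.toNat using Nat.strong_induction_on with m ih generalizing k
  rcases lt_or_ge k 0 with hneg | hnonneg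
  · simp [oddFourSqReps_of_neg hneg, posFactorPairs_of_neg hneg]
  by_cases h4 : k = 4
  · simp [h4, card_oddFourSqReps_four, sum_posFactorPairs_four]
  have hN : ¬IsSquare (k + 1) := by
    rintro ⟨i, hi⟩
    rw [← pow_two] at hi
    rcases Int.even_or_odd i with ⟨j, rfl⟩ | h
    · ring_nf at hi
      lia
    · have := Int.eight_dvd_sq_sub_one_of_odd h
      lia
  have h₁ := sum_oddFourSqReps_recursion (k + 1)
  have h₂ := sum_posFactorPairs_recursion hN
  rw [← sum_filter_of_ne (p := Odd)] at h₂
  · have h : ∑ i ∈ (Icc (-(k + 1)) (k + 1)).filter Odd, (k + 1 - 5 * i ^ 2) *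
        ((#(oddFourSqReps (k + 1 - i ^ 2)) : ℤ) -
          16 * ∑ y ∈ posFactorPairs (k + 1 - i ^ 2), y.1) = 0 := by
      simp only [mul_sub, sum_sub_distrib, h₁, mul_left_comm _ (16 : ℤ), ← mul_sum, h₂]
      simp
    rw [← sum_subset (s₁ := {1, -1})] at h
    · rw [sum_pair (by decide)] at h
      norm_num at h
      lia
    · intro i hi
      rw [mem_insert, mem_singleton] at hi
      rw [mem_filter, mem_Icc]
      rcases hi with rfl | rfl <;> exact ⟨by lia, by decide⟩
    · intro i hi hi'
      simp only [mem_insert, mem_singleton, ← sq_eq_one_iff] at hi'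
      rw [mem_filter] at hi
      have hmod := Int.eight_dvd_sq_sub_one_of_odd hi.2
      have hsq := sq_nonneg i
      rcases lt_or_ge (k + 1 - i ^ 2) 0 with hneg | _
      · simp [oddFourSqReps_of_neg hneg, posFactorPairs_of_neg hneg]
      · rw [ih _ _ (k + 1 - i ^ 2) (by lia) rfl, sub_self, mul_zero]
        lia
  · intro i _ hi
    by_contra h
    rw [Int.not_odd_iff_even] at h
    obtain ⟨j, rfl⟩ := h
    refine hi ?_
    rw [sum_eq_zero, mul_zero]
    intro x hx
    exfalso
    rw [mem_posFactorPairs] at hx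
    have := hx.2.2
    ring_nf at this
    lia

lemma sum_posFactorPairs_eq_sum_divisors (m : ℕ) :
    ∑ y ∈ posFactorPairs (4 * m), y.1 = ∑ d ∈ m.divisors, (d : ℤ) := by
  rw [← Nat.sum_divisorsAntidiagonal fun d _ ↦ (d : ℤ)]
  refine sum_nbij' (fun y ↦ (y.1.toNat, y.2.toNat)) (fun y ↦ ((y.1 : ℤ), (y.2 : ℤ))) ?_ ?_ ?_ ?_ ?_
  · rintro ⟨d, e⟩ h
    rw [mem_posFactorPairs] at h
    obtain ⟨hd, he, h⟩ := h
    lift d to ℕ using hd.le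
    lift e to ℕ using he.le
    simp only [Int.toNat_natCast, Nat.mem_divisorsAntidiagonal]
    dsimp only at hd he h
    norm_cast at hd he h
    have : d * e = m := by linarith
    exact ⟨this, this ▸ by positivity⟩
  · rintro ⟨d, e⟩ h
    rw [Nat.mem_divisorsAntidiagonal] at h
    obtain ⟨rfl, h⟩ := h
    simp only at h
    rw [mem_posFactorPairs]
    simp only
    have := Nat.pos_of_ne_zero (left_ne_zero_of_mul h)
    have := Nat.pos_of_ne_zero (right_ne_zero_of_mul h)
    exact ⟨by lia, by lia, by push_cast; ring⟩
  · rintro ⟨d, e⟩ h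
    rw [mem_posFactorPairs] at h
    simp [h.1.le, h.2.1.le]
  · rintro ⟨d, e⟩ -
    simp
  · rintro ⟨d, e⟩ h
    rw [mem_posFactorPairs] at h
    simp [h.1.le]

lemma card_oddFourSqReps_four_mul {m : ℕ} (hm : Odd m) :
    (#(oddFourSqReps (4 * m)) : ℤ) = 16 * ∑ d ∈ m.divisors, (d : ℤ) := by
  rw [← sum_posFactorPairs_eq_sum_divisors, card_oddFourSqReps]
  obtain ⟨j, rfl⟩ := hm
  lia

lemma sq_emod_four (x : ℤ) : x ^ 2 % 4 = x % 2 := by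
  rcases Int.even_or_odd x with h | h
  · rw [Int.even_iff.1 h]
    obtain ⟨j, rfl⟩ := h
    ring_nf
    lia
  · rw [Int.sq_mod_four_eq_one_of_odd h, Int.odd_iff.1 h]

lemma card_fourSqReps_two_mul_filter (k : ℤ) :
    #((fourSqReps (2 * k)).filter fun x ↦ x.1 % 2 = x.2.1 % 2) = #(fourSqReps k) := by
  refine card_nbij'
    (fun x ↦ ((x.1 + x.2.1) / 2, (x.1 - x.2.1) / 2, (x.2.2.1 + x.2.2.2) / 2,
      (x.2.2.1 - x.2.2.2) / 2))
    (fun x ↦ (x.1 + x.2.1, x.1 - x.2.1, x.2.2.1 + x.2.2.2, x.2.2.1 - x.2.2.2)) ?_ ?_ ?_ ?_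
  · rintro ⟨a, b, c, d⟩ h
    simp only [coe_filter, Set.mem_ofPred_eq, mem_coe, mem_fourSqReps] at h ⊢
    have := sq_emod_four a
    have := sq_emod_four b
    have := sq_emod_four c
    have := sq_emod_four d
    obtain ⟨u, hu⟩ : ∃ u, a = b + 2 * u := ⟨(a - b) / 2, by lia⟩
    obtain ⟨v, hv⟩ : ∃ v, c = d + 2 * v := ⟨(c - d) / 2, by lia⟩
    rw [show (a + b) / 2 = b + u by lia, show (a - b) / 2 = u by lia,
      show (c + d) / 2 = d + v by lia, show (c - d) / 2 = v by lia]
    rw [hu, hv] at h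
    linarith
  · rintro ⟨a, b, c, d⟩ h
    simp only [coe_filter, Set.mem_ofPred_eq, mem_coe, mem_fourSqReps] at h ⊢
    exact ⟨by rw [← h]; ring, by lia⟩
  · rintro ⟨a, b, c, d⟩ h
    simp only [coe_filter, Set.mem_ofPred_eq, mem_fourSqReps] at h
    have := sq_emod_four a
    have := sq_emod_four b
    have := sq_emod_four c
    have := sq_emod_four d
    ext <;> dsimp only <;> lia
  · rintro ⟨a, b, c, d⟩ -
    ext <;> dsimp only <;> lia

lemma card_fourSqReps_four_mul (k : ℤ) : #(fourSqReps (4 * k)) = #(fourSqReps (2 * k)) := by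
  rw [← card_fourSqReps_two_mul_filter (2 * k), ← mul_assoc, filter_true_of_mem]
  · rfl
  intro x hx
  rw [mem_fourSqReps] at hx
  have := sq_emod_four x.1
  have := sq_emod_four x.2.1
  have := sq_emod_four x.2.2.1
  have := sq_emod_four x.2.2.2
  lia

lemma card_fourSqReps_two_mul {k : ℤ} (hk : Odd k) :
    #(fourSqReps (2 * k)) = 3 * #(fourSqReps k) := by
  have e₁ : #((fourSqReps (2 * k)).filter fun x ↦ x.1 % 2 = x.2.2.1 % 2) = #(fourSqReps k) := by
    rw [← card_fourSqReps_two_mul_filter]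
    refine card_nbij' (fun x ↦ (x.1, x.2.2.1, x.2.1, x.2.2.2))
      (fun x ↦ (x.1, x.2.2.1, x.2.1, x.2.2.2)) ?_ ?_ ?_ ?_ <;>
      simp +contextual [Set.MapsTo, Set.LeftInvOn, mem_fourSqReps, add_right_comm]
  have e₂ : #((fourSqReps (2 * k)).filter fun x ↦ x.1 % 2 = x.2.2.2 % 2) = #(fourSqReps k) := by
    rw [← card_fourSqReps_two_mul_filter]
    refine card_nbij' (fun x ↦ (x.1, x.2.2.2, x.2.2.1, x.2.1))
      (fun x ↦ (x.1, x.2.2.2, x.2.2.1, x.2.1)) ?_ ?_ ?_ ?_ <;> intro x <;>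
      grind [mem_fourSqReps]
  have e₀ := card_fourSqReps_two_mul_filter k
  have hpar : ∀ x ∈ fourSqReps (2 * k),
      (if x.1 % 2 = x.2.1 % 2 then 1 else 0) + (if x.1 % 2 = x.2.2.1 % 2 then 1 else 0) +
        (if x.1 % 2 = x.2.2.2 % 2 then 1 else 0) = 1 := by
    intro x hx
    rw [mem_fourSqReps] at hx
    have := sq_emod_four x.1
    have := sq_emod_four x.2.1
    have := sq_emod_four x.2.2.1
    have := sq_emod_four x.2.2.2
    rw [Int.odd_iff] at hk
    lia
  rw [card_filter] at e₀ e₁ e₂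
  rw [card_eq_sum_ones, ← sum_congr rfl hpar, sum_add_distrib, sum_add_distrib, e₀, e₁, e₂]
  ring

lemma card_fourSqReps_four_mul_eq_add (k : ℤ) :
    #(fourSqReps (4 * k)) = #(fourSqReps k) + #(oddFourSqReps (4 * k)) := by
  rw [← card_filter_add_card_filter_not fun x : ℤ × ℤ × ℤ × ℤ ↦ x.1 % 2 = 0]
  congr 1
  · refine card_nbij' (fun x ↦ (x.1 / 2, x.2.1 / 2, x.2.2.1 / 2, x.2.2.2 / 2))
      (fun x ↦ (2 * x.1, 2 * x.2.1, 2 * x.2.2.1, 2 * x.2.2.2)) ?_ ?_ ?_ ?_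
    · rintro ⟨a, b, c, d⟩ h
      simp only [coe_filter, Set.mem_ofPred_eq, mem_coe, mem_fourSqReps] at h ⊢
      have := sq_emod_four a
      have := sq_emod_four b
      have := sq_emod_four c
      have := sq_emod_four d
      obtain ⟨a, rfl⟩ : 2 ∣ a := by lia
      obtain ⟨b, rfl⟩ : 2 ∣ b := by lia
      obtain ⟨c, rfl⟩ : 2 ∣ c := by lia
      obtain ⟨d, rfl⟩ : 2 ∣ d := by lia
      simp only [Int.mul_ediv_cancel_left _ (two_ne_zero' ℤ)]
      linarith
    · rintro ⟨a, b, c, d⟩ h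
      simp only [coe_filter, Set.mem_ofPred_eq, mem_coe, mem_fourSqReps] at h ⊢
      exact ⟨by rw [← h]; ring, by lia⟩
    · rintro ⟨a, b, c, d⟩ h
      simp only [coe_filter, Set.mem_ofPred_eq, mem_fourSqReps] at h
      have := sq_emod_four a
      have := sq_emod_four b
      have := sq_emod_four c
      have := sq_emod_four d
      ext <;> dsimp only <;> lia
    · rintro ⟨a, b, c, d⟩ -
      ext <;> dsimp only <;> lia
  · rw [oddFourSqReps]
    congr 1
    refine filter_congr fun x hx ↦ ?_
    rw [mem_fourSqReps] at hx
    have := sq_emod_four x.1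
    have := sq_emod_four x.2.1
    have := sq_emod_four x.2.2.1
    have := sq_emod_four x.2.2.2
    simp only [Int.odd_iff]
    lia

lemma card_fourSqReps_of_odd {m : ℕ} (hm : Odd m) :
    (#(fourSqReps m) : ℤ) = 8 * ∑ d ∈ m.divisors, (d : ℤ) := by
  have h₁ := card_fourSqReps_four_mul_eq_add m
  have h₂ := card_fourSqReps_four_mul m
  have h₃ := card_fourSqReps_two_mul (k := m) (by exact_mod_cast hm)
  have h₄ := card_oddFourSqReps_four_mul hm
  lia

lemma sum_divisors_prime_mul_s19 {p m : ℕ} (hp : p.Prime) (hm : m ≠ 0) :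
    ∑ d ∈ (p * m).divisors, (d : ℤ) =
      (p + 1) * ∑ d ∈ m.divisors, (d : ℤ) - p * sigmaDiv m p := by
  obtain ⟨j, u, hu, rfl⟩ := Nat.exists_eq_pow_mul_and_not_dvd hm p hp.ne_one
  have hcop (i : ℕ) : Nat.Coprime (p ^ i) u := (hp.coprime_iff_not_dvd.2 hu).pow_left i
  have hmul (i : ℕ) : ∑ d ∈ (p ^ i * u).divisors, (d : ℤ) =
      (∑ d ∈ range (i + 1), (p : ℤ) ^ d) * ∑ d ∈ u.divisors, (d : ℤ) := by
    have := (hcop i).sum_divisors_mul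
    rw [Nat.sum_divisors_prime_pow hp] at this
    simpa using congrArg (Nat.cast : ℕ → ℤ) this
  rw [← mul_assoc, ← pow_succ', hmul, hmul, sigmaDiv]
  cases j with
  | zero => simp [hu, sum_range_succ, add_comm]
  | succ j =>
    have hdvd : p ∣ p ^ (j + 1) * u := Dvd.dvd.mul_right (dvd_pow_self p j.succ_ne_zero) u
    have hdiv : p ^ (j + 1) * u / p = p ^ j * u := by
      rw [pow_succ', mul_assoc, Nat.mul_div_cancel_left _ hp.pos]
    rw [if_pos hdvd, hdiv, hmul, sum_range_succ _ (j + 1 + 1), sum_range_succ _ (j + 1)]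
    ring

lemma sigmaDiv_mul_left {n k l : ℕ} (hl : 0 < l) : sigmaDiv (l * n) (l * k) = sigmaDiv n k := by
  simp only [sigmaDiv, Nat.mul_dvd_mul_iff_left hl, Nat.mul_div_mul_left _ _ hl]

lemma sigmaDiv_of_not_dvd {n k : ℕ} (h : ¬k ∣ n) : sigmaDiv n k = 0 := if_neg h

lemma sigmaDiv_mul_self {n k : ℕ} (hk : 0 < k) : sigmaDiv (k * n) k = sigmaDiv n 1 := by
  simpa using sigmaDiv_mul_left (n := n) (k := 1) hk

lemma sigmaDiv_prime_mul {p m : ℕ} (hp : p.Prime) (hm : m ≠ 0) :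
    sigmaDiv (p * m) 1 = (p + 1) * sigmaDiv m 1 - p * sigmaDiv m p := by
  simpa [sigmaDiv] using sum_divisors_prime_mul_s19 hp hm

/-- Jacobi's four-square theorem. -/
theorem card_fourSqReps (n : ℕ) (hn : n ≠ 0) :
    (#(fourSqReps n) : ℤ) = 8 * sigmaDiv n 1 - 32 * sigmaDiv n 4 := by
  induction n using Nat.strong_induction_on with
  | _ n ih =>
  rcases Nat.even_or_odd' n with ⟨m, rfl | rfl⟩
  · have hm : m ≠ 0 := by lia
    have h := sigmaDiv_prime_mul Nat.prime_two hm
    rcases Nat.even_or_odd' m with ⟨l, rfl | rfl⟩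
    · have hl : l ≠ 0 := by lia
      have h' := sigmaDiv_prime_mul Nat.prime_two hl
      have ih' := ih (2 * l) (by lia) hm
      rw [sigmaDiv_mul_self two_pos] at h
      rw [show 2 * (2 * l) = 4 * l by ring] at h ⊢
      rw [show (4 : ℕ) = 2 * 2 by rfl, sigmaDiv_mul_left two_pos] at ih'
      rw [sigmaDiv_mul_self four_pos]
      push_cast at *
      rw [card_fourSqReps_four_mul]
      linarith
    · have h₁ := card_fourSqReps_of_odd (m := 2 * l + 1) ⟨l, rfl⟩
      have h₂ := card_fourSqReps_two_mul (k := 2 * l + 1) ⟨l, rfl⟩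
      rw [sigmaDiv_of_not_dvd (by lia : ¬2 ∣ 2 * l + 1)] at h
      rw [sigmaDiv_of_not_dvd (by lia : ¬4 ∣ 2 * (2 * l + 1)), h]
      rw [sigmaDiv, if_pos (one_dvd _), Nat.div_one]
      push_cast at *
      lia
  · rw [card_fourSqReps_of_odd ⟨m, rfl⟩, sigmaDiv_of_not_dvd (by lia : ¬4 ∣ 2 * m + 1)]
    simp [sigmaDiv]

lemma sq_emod_three (x : ℤ) : x ^ 2 % 3 = if x % 3 = 0 then 0 else 1 := by
  have : x % 3 = 0 ∨ x % 3 = 1 ∨ x % 3 = 2 := by lia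
  rcases this with h | h | h <;> simp [pow_two, Int.mul_emod, h]

lemma card_fourSqReps_filter_three_dvd {n : ℕ} (hn : n ≠ 0) :
    (#((fourSqReps n).filter fun x ↦
      x.1 % 3 = 0 ∧ x.2.1 % 3 = 0 ∧ x.2.2.1 % 3 = 0 ∧ x.2.2.2 % 3 = 0) : ℤ) =
      8 * sigmaDiv n 9 - 32 * sigmaDiv n 36 := by
  by_cases h9 : 9 ∣ n
  · obtain ⟨m, rfl⟩ := h9
    rw [sigmaDiv_mul_self (by simp), show 36 = 9 * 4 by rfl, sigmaDiv_mul_left (by simp),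
      ← card_fourSqReps m (by lia), Nat.cast_inj]
    refine card_nbij' (fun x ↦ (x.1 / 3, x.2.1 / 3, x.2.2.1 / 3, x.2.2.2 / 3))
      (fun x ↦ (3 * x.1, 3 * x.2.1, 3 * x.2.2.1, 3 * x.2.2.2)) ?_ ?_ ?_ ?_
    · rintro ⟨a, b, c, d⟩ h
      simp only [coe_filter, Set.mem_ofPred_eq, mem_coe, mem_fourSqReps] at h ⊢
      obtain ⟨h, ha, hb, hc, hd⟩ := h
      obtain ⟨a, rfl⟩ := Int.dvd_of_emod_eq_zero ha
      obtain ⟨b, rfl⟩ := Int.dvd_of_emod_eq_zero hb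
      obtain ⟨c, rfl⟩ := Int.dvd_of_emod_eq_zero hc
      obtain ⟨d, rfl⟩ := Int.dvd_of_emod_eq_zero hd
      simp only [Int.mul_ediv_cancel_left _ (three_ne_zero' ℤ)]
      push_cast at h
      linarith
    · rintro ⟨a, b, c, d⟩ h
      simp only [coe_filter, Set.mem_ofPred_eq, mem_coe, mem_fourSqReps] at h ⊢
      exact ⟨by push_cast; rw [← h]; ring, by lia⟩
    · rintro ⟨a, b, c, d⟩ h
      simp only [coe_filter, Set.mem_ofPred_eq] at h
      ext <;> dsimp only <;> lia
    · rintro ⟨a, b, c, d⟩ -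
      ext <;> dsimp only <;> lia
  · rw [sigmaDiv_of_not_dvd h9, sigmaDiv_of_not_dvd (by lia), filter_false_of_mem]
    · simp
    rintro ⟨a, b, c, d⟩ h ⟨ha, hb, hc, hd⟩
    rw [mem_fourSqReps] at h
    dsimp only at *
    obtain ⟨a, rfl⟩ := Int.dvd_of_emod_eq_zero ha
    obtain ⟨b, rfl⟩ := Int.dvd_of_emod_eq_zero hb
    obtain ⟨c, rfl⟩ := Int.dvd_of_emod_eq_zero hc
    obtain ⟨d, rfl⟩ := Int.dvd_of_emod_eq_zero hd
    ring_nf at h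
    lia

lemma card_fourSqReps_filter_signs (k : ℤ) :
    #((fourSqReps k).filter fun x ↦
      x.1 % 3 ≠ 0 ∧ x.2.1 % 3 ≠ 0 ∧ x.2.2.1 % 3 ≠ 0 ∧ x.2.2.2 % 3 = 0) =
    8 * #((fourSqReps k).filter fun x ↦
      x.1 % 3 = 1 ∧ x.2.1 % 3 = 1 ∧ x.2.2.1 % 3 = 1 ∧ x.2.2.2 % 3 = 0) := by
  have h8 : #(({1, -1} : Finset ℤ) ×ˢ ({1, -1} : Finset ℤ) ×ˢ ({1, -1} : Finset ℤ)) = 8 := rfl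
  rw [← h8, ← card_product]
  obtain ⟨s, hs⟩ : ∃ s : ℤ → ℤ, ∀ a, s a = if a % 3 = 1 then 1 else -1 := ⟨_, fun _ ↦ rfl⟩
  have hsign (a : ℤ) : s a = 1 ∨ s a = -1 := by rw [hs]; split_ifs <;> simp
  have hinv (a : ℤ) : s a * (s a * a) = a := by rcases hsign a with h | h <;> simp [h]
  have hsq (a : ℤ) : (s a * a) ^ 2 = a ^ 2 := by rcases hsign a with h | h <;> simp [h]
  have hmod {a : ℤ} (ha : a % 3 ≠ 0) : s a * a % 3 = 1 := by rw [hs]; split_ifs <;> lia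
  have hmul {e a : ℤ} (he : e = 1 ∨ e = -1) (ha : a % 3 = 1) :
      s (e * a) = e ∧ e * (e * a) = a ∧ (e * a) ^ 2 = a ^ 2 ∧ e * a % 3 ≠ 0 := by
    rcases he with rfl | rfl
    · simp [hs, ha]
    · refine ⟨?_, by ring, by ring, by lia⟩
      rw [hs, if_neg (by lia)]
  refine card_nbij' (fun x ↦ ((s x.1, s x.2.1, s x.2.2.1),
      (s x.1 * x.1, s x.2.1 * x.2.1, s x.2.2.1 * x.2.2.1, x.2.2.2)))
    (fun x ↦ (x.1.1 * x.2.1, x.1.2.1 * x.2.2.1, x.1.2.2 * x.2.2.2.1, x.2.2.2.2)) ?_ ?_ ?_ ?_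
  all_goals
    intro x hx
    simp only [coe_filter, Set.mem_ofPred_eq, mem_coe, mem_fourSqReps, mem_filter, mem_product,
      mem_insert, mem_singleton] at hx ⊢
  · obtain ⟨h, ha, hb, hc, hd⟩ := hx
    exact ⟨⟨hsign _, hsign _, hsign _⟩, by simpa only [hsq] using h, hmod ha, hmod hb, hmod hc, hd⟩
  · obtain ⟨⟨he, hf, hg⟩, h, ha, hb, hc, hd⟩ := hx
    obtain ⟨-, -, ha, ha'⟩ := hmul he ha
    obtain ⟨-, -, hb, hb'⟩ := hmul hf hb
    obtain ⟨-, -, hc, hc'⟩ := hmul hg hc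
    exact ⟨by rw [ha, hb, hc, h], ha', hb', hc', hd⟩
  · simp only [hinv]
  · obtain ⟨⟨he, hf, hg⟩, h, ha, hb, hc, hd⟩ := hx
    obtain ⟨ha, ha', -⟩ := hmul he ha
    obtain ⟨hb, hb', -⟩ := hmul hf hb
    obtain ⟨hc, hc', -⟩ := hmul hg hc
    simp only [ha, hb, hc, ha', hb', hc']

lemma card_fourSqReps_eq_add_of_three_dvd {k : ℤ} (hk : k % 3 = 0) :
    #(fourSqReps k) =
    #((fourSqReps k).filter fun x ↦
      x.1 % 3 = 0 ∧ x.2.1 % 3 = 0 ∧ x.2.2.1 % 3 = 0 ∧ x.2.2.2 % 3 = 0) +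
    4 * #((fourSqReps k).filter fun x ↦
      x.1 % 3 ≠ 0 ∧ x.2.1 % 3 ≠ 0 ∧ x.2.2.1 % 3 ≠ 0 ∧ x.2.2.2 % 3 = 0) := by
  have e₀ : #((fourSqReps k).filter fun x ↦
      x.2.2.2 % 3 ≠ 0 ∧ x.2.1 % 3 ≠ 0 ∧ x.2.2.1 % 3 ≠ 0 ∧ x.1 % 3 = 0) =
      #((fourSqReps k).filter fun x ↦
      x.1 % 3 ≠ 0 ∧ x.2.1 % 3 ≠ 0 ∧ x.2.2.1 % 3 ≠ 0 ∧ x.2.2.2 % 3 = 0) := by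
    refine card_nbij' (fun x ↦ (x.2.2.2, x.2.1, x.2.2.1, x.1))
      (fun x ↦ (x.2.2.2, x.2.1, x.2.2.1, x.1)) ?_ ?_ ?_ ?_ <;> intro x <;>
      grind [mem_fourSqReps]
  have e₁ : #((fourSqReps k).filter fun x ↦
      x.1 % 3 ≠ 0 ∧ x.2.2.2 % 3 ≠ 0 ∧ x.2.2.1 % 3 ≠ 0 ∧ x.2.1 % 3 = 0) =
      #((fourSqReps k).filter fun x ↦
      x.1 % 3 ≠ 0 ∧ x.2.1 % 3 ≠ 0 ∧ x.2.2.1 % 3 ≠ 0 ∧ x.2.2.2 % 3 = 0) := by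
    refine card_nbij' (fun x ↦ (x.1, x.2.2.2, x.2.2.1, x.2.1))
      (fun x ↦ (x.1, x.2.2.2, x.2.2.1, x.2.1)) ?_ ?_ ?_ ?_ <;> intro x <;>
      grind [mem_fourSqReps]
  have e₂ : #((fourSqReps k).filter fun x ↦
      x.1 % 3 ≠ 0 ∧ x.2.1 % 3 ≠ 0 ∧ x.2.2.2 % 3 ≠ 0 ∧ x.2.2.1 % 3 = 0) =
      #((fourSqReps k).filter fun x ↦
      x.1 % 3 ≠ 0 ∧ x.2.1 % 3 ≠ 0 ∧ x.2.2.1 % 3 ≠ 0 ∧ x.2.2.2 % 3 = 0) := by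
    refine card_nbij' (fun x ↦ (x.1, x.2.1, x.2.2.2, x.2.2.1))
      (fun x ↦ (x.1, x.2.1, x.2.2.2, x.2.2.1)) ?_ ?_ ?_ ?_ <;> intro x <;>
      grind [mem_fourSqReps]
  rw [show ∀ a b : ℕ, a + 4 * b = a + b + b + b + b by intros; ring]
  nth_rewrite 1 [← e₀]
  nth_rewrite 1 [← e₁]
  nth_rewrite 1 [← e₂]
  simp only [card_filter, ← sum_add_distrib]
  rw [card_eq_sum_ones]
  refine sum_congr rfl fun x hx ↦ ?_
  rw [mem_fourSqReps] at hx
  have h₀ := sq_emod_three x.1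
  have h₁ := sq_emod_three x.2.1
  have h₂ := sq_emod_three x.2.2.1
  have h₃ := sq_emod_three x.2.2.2
  clear e₀ e₁ e₂
  split_ifs at h₀ h₁ h₂ h₃ <;> grind

lemma sigmaDiv_three_mul {n k : ℕ} (hn : n ≠ 0) (h3 : 3 ∣ n) (hk : k.Coprime 3) :
    sigmaDiv n k = 4 * sigmaDiv n (k * 3) - 3 * sigmaDiv n (k * 9) := by
  by_cases h : k ∣ n
  · obtain ⟨m, rfl⟩ := hk.mul_dvd_of_dvd_of_dvd h h3
    have hk0 : 0 < k := Nat.pos_of_ne_zero (by rintro rfl; simp at hn)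
    have := sigmaDiv_prime_mul Nat.prime_three (m := m) (by rintro rfl; simp at hn)
    rw [mul_assoc, sigmaDiv_mul_self hk0, sigmaDiv_mul_left hk0, sigmaDiv_mul_left hk0,
      sigmaDiv_mul_self three_pos, show 9 = 3 * 3 by rfl, sigmaDiv_mul_left three_pos, this]
    norm_num
  · rw [sigmaDiv_of_not_dvd h, sigmaDiv_of_not_dvd fun h' ↦ h (dvd_of_mul_right_dvd h'),
      sigmaDiv_of_not_dvd fun h' ↦ h (dvd_of_mul_right_dvd h')]
    simp

theorem rep_four_squares_1110_mod3 (n : ℕ) (hn : 0 < n) :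
    ({x : Fin 4 → ℤ | x 0 ^ 2 + x 1 ^ 2 + x 2 ^ 2 + x 3 ^ 2 = (n : ℤ) ∧
        x 0 % 3 = 1 ∧ x 1 % 3 = 1 ∧ x 2 % 3 = 1 ∧ x 3 % 3 = 0}.ncard : ℤ) =
      sigmaDiv n 3 - sigmaDiv n 9 - 4 * sigmaDiv n 12 + 4 * sigmaDiv n 36 := by
  have hcard : {x : Fin 4 → ℤ | x 0 ^ 2 + x 1 ^ 2 + x 2 ^ 2 + x 3 ^ 2 = (n : ℤ) ∧
      x 0 % 3 = 1 ∧ x 1 % 3 = 1 ∧ x 2 % 3 = 1 ∧ x 3 % 3 = 0}.ncard =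
      #((fourSqReps n).filter fun x ↦
        x.1 % 3 = 1 ∧ x.2.1 % 3 = 1 ∧ x.2.2.1 % 3 = 1 ∧ x.2.2.2 % 3 = 0) := by
    rw [← Set.ncard_coe_finset]
    refine Set.ncard_congr (fun x _ ↦ (x 0, x 1, x 2, x 3)) ?_ ?_ ?_
    · intro x hx
      simpa [mem_fourSqReps] using hx
    · intro x y _ _ h
      simp only [Prod.mk.injEq] at h
      ext i
      fin_cases i <;> simp [h]
    · rintro ⟨a, b, c, d⟩ h
      exact ⟨![a, b, c, d], by simpa [mem_fourSqReps] using h, by simp⟩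
  rw [hcard]
  by_cases h3 : 3 ∣ n
  · have h₁ := card_fourSqReps_eq_add_of_three_dvd (k := n) (by lia)
    rw [card_fourSqReps_filter_signs] at h₁
    have h₂ := card_fourSqReps_filter_three_dvd hn.ne'
    have h₃ := card_fourSqReps n hn.ne'
    have h₄ := sigmaDiv_three_mul hn.ne' h3 (k := 1) (by decide)
    have h₅ := sigmaDiv_three_mul hn.ne' h3 (k := 4) (by decide)
    norm_num at h₄ h₅
    lia
  · rw [filter_false_of_mem]
    · rw [sigmaDiv_of_not_dvd h3, sigmaDiv_of_not_dvd (by lia), sigmaDiv_of_not_dvd (by lia),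
        sigmaDiv_of_not_dvd (by lia)]
      simp
    · intro x hx hmod
      rw [mem_fourSqReps] at hx
      have := sq_emod_three x.1
      have := sq_emod_three x.2.1
      have := sq_emod_three x.2.2.1
      have := sq_emod_three x.2.2.2
      grind
end
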